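/- Given a short exact sequence N → G → F of affine supergroup schemes over a field k of characteristic ≠ 2, the supergroup scheme G is unipotent if and only if both N and F are unipotent. -/

import Mathlib

/-!
A Hopf superalgebra is irreducible iff every nonzero subcoalgebra contains `1`, iff the functionals
vanishing at `1` act locally nilpotently by `f ↦ (f ⊗ id) Δ`; then even every nonzero one-sided
coideal contains `1`. The step from subcoalgebras to nilpotency is Artinian: a finite-dimensional
subcoalgebra is dual to an Artinian ring in which the functionals vanishing at `1` form the largest
proper two-sided ideal, and such an ideal is nilpotent. Both characterizations pass to sub- and
quotient Hopf superalgebras, which gives one direction.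

For the converse, write `F → H → K` for the sequence of Hopf superalgebras, with maps `p` and `q`,
and let `F` and `K` be irreducible. As the dual of `K` acts locally nilpotently on `H`, a nonzero
subcoalgebra `D` of `H` contains a nonzero coinvariant of `q`. If the coinvariants lie in `p(F)`,
those in `D` form a nonzero right coideal of `F`, so `1 ∈ D`.

It remains to see that a coinvariant `b` lies in `p(F)`; this is proved without knowing that `H` is
faithfully flat over `F`. By exactness and the bijectivity of `a ⊗ y ↦ Δ(a)(1 ⊗ y)`, coinvariants
satisfy `w ⊗ 1 = 1 ⊗ w` in `H ⊗_F H` (`sub_mem_balanced`). For finitely many `w` only finitely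
many scalars from `F` are involved, which generate a Noetherian algebra. Choosing `e ≠ 0` in `p(F)`
killed by the odd scalars and with prime annihilator in the even ones, the relation
`e ⊗ e w = e w ⊗ e` over the residue field makes `e w` proportional to `e`. So some nonzero `x` in
`p(F)` satisfies `x w ∈ p(F)` for all `w` in the finite-dimensional parity-stable right coideal `W`
generated by `b` (`exists_multiplier`). The identity `Δ(x)(w ⊗ 1) = ∑ Δ(x w₁)(1 ⊗ S w₂)` shows
that the multipliers `{x ∈ F | p(x) W ⊆ p(F)}` form a right coideal of `F`. It is nonzero, hence
contains `1`, and so `b ∈ p(F)`.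
-/

open TensorProduct CategoryTheory

noncomputable section

/-- A Hopf superalgebra over a field `k` (with `char k ≠ 2`), presented as an
algebra together with even/odd projection operators encoding the `ℤ₂`-grading,
and comultiplication, counit and antipode satisfying the axioms of a
Hopf-algebra object in the symmetric tensor category of super-vector spaces
(the Koszul sign rule being encoded via the odd projections; this encoding is
faithful since `char k ≠ 2`). -/
structure HopfSuperalgebra (k : Type) [Field k] : Type 1 where
  carrier : Type
  [ring : Ring carrier]
  [alg : Algebra k carrier]
  /-- the projection onto the even part -/
  pe : carrier →ₗ[k] carrier
  /-- the projection onto the odd part -/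
  po : carrier →ₗ[k] carrier
  pe_add_po : ∀ a, pe a + po a = a
  pe_po : ∀ a, pe (po a) = 0
  po_pe : ∀ a, po (pe a) = 0
  mul_even_even : ∀ a b, po a = 0 → po b = 0 → po (a * b) = 0
  mul_even_odd : ∀ a b, po a = 0 → pe b = 0 → pe (a * b) = 0
  mul_odd_even : ∀ a b, pe a = 0 → po b = 0 → pe (a * b) = 0
  mul_odd_odd : ∀ a b, pe a = 0 → pe b = 0 → po (a * b) = 0
  one_even : po 1 = 0
  comul : carrier →ₗ[k] carrier ⊗[k] carrier
  counit : carrier →ₗ[k] k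
  antipode : carrier →ₗ[k] carrier
  comul_even : ∀ a, po a = 0 →
    comul a = TensorProduct.map pe pe (comul a) + TensorProduct.map po po (comul a)
  comul_odd : ∀ a, pe a = 0 →
    comul a = TensorProduct.map pe po (comul a) + TensorProduct.map po pe (comul a)
  counit_odd : ∀ a, pe a = 0 → counit a = 0
  antipode_pe : ∀ a, antipode (pe a) = pe (antipode a)
  coassoc : ∀ a, (TensorProduct.assoc k carrier carrier carrier)
      ((TensorProduct.map comul LinearMap.id) (comul a)) =
      (TensorProduct.map LinearMap.id comul) (comul a)
  counit_comul : ∀ a,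
    (TensorProduct.lid k carrier) ((TensorProduct.map counit LinearMap.id) (comul a)) = a
  comul_counit : ∀ a,
    (TensorProduct.rid k carrier) ((TensorProduct.map LinearMap.id counit) (comul a)) = a
  comul_one : comul 1 = 1 ⊗ₜ[k] 1
  /-- `Δ` is an algebra map for the super (sign-twisted) multiplication of
  `A ⊗ A`: since `(a⊗b)·(c⊗d) = (-1)^{|b||c|} ac ⊗ bd`, the sign twist amounts
  to the correction term `-2·((1⊗po)Δa)·((po⊗1)Δb)`. -/
  comul_mul : ∀ a b, comul (a * b) =
      comul a * comul b -
        (2 : k) • ((TensorProduct.map LinearMap.id po) (comul a) *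
          (TensorProduct.map po LinearMap.id) (comul b))
  counit_one : counit 1 = 1
  counit_mul : ∀ a b, counit (a * b) = counit a * counit b
  antipode_comul : ∀ a, (LinearMap.mul' k carrier)
      ((TensorProduct.map antipode LinearMap.id) (comul a)) = algebraMap k carrier (counit a)
  comul_antipode : ∀ a, (LinearMap.mul' k carrier)
      ((TensorProduct.map LinearMap.id antipode) (comul a)) = algebraMap k carrier (counit a)

attribute [instance] HopfSuperalgebra.ring HopfSuperalgebra.alg

namespace HopfSuperalgebra

variable {k : Type} [Field k] (H : HopfSuperalgebra k)

/-- super-commutativity: even elements are central, odd elements anticommute. -/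
def IsSuperCommutative : Prop :=
  (∀ a b : H.carrier, H.po a = 0 → a * b = b * a) ∧
  (∀ a b : H.carrier, H.pe a = 0 → H.pe b = 0 → a * b = -(b * a))

/-- the super-symmetry `c(v ⊗ w) = (-1)^{|v||w|} w ⊗ v` on `H ⊗ H`. -/
def superSwap : H.carrier ⊗[k] H.carrier →ₗ[k] H.carrier ⊗[k] H.carrier :=
  (TensorProduct.comm k H.carrier H.carrier).toLinearMap ∘ₗ
    (LinearMap.id - (2 : k) • TensorProduct.map H.po H.po)

def IsSuperCocommutative : Prop := ∀ a, H.superSwap (H.comul a) = H.comul a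

/-- the primitive elements `{u | Δu = 1⊗u + u⊗1}`. -/
def primitives : Submodule k H.carrier :=
  LinearMap.ker (H.comul -
    ((TensorProduct.mk k H.carrier H.carrier) 1 +
      (TensorProduct.mk k H.carrier H.carrier).flip 1))

def IsPurelyEven : Prop := ∀ a, H.po a = 0

/-- the convolution product of two linear functionals on `H`. -/
def conv (f g : H.carrier →ₗ[k] k) : H.carrier →ₗ[k] k :=
  LinearMap.mul' k k ∘ₗ TensorProduct.map f g ∘ₗ H.comul

/-- the largest purely even subcoalgebra `H̲ = Δ⁻¹(H₀ ⊗ H₀)`. -/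
def underline : Submodule k H.carrier :=
  Submodule.comap H.comul (LinearMap.range
    (TensorProduct.map (LinearMap.ker H.po).subtype (LinearMap.ker H.po).subtype))

/-- the odd primitives `V_H = P(H)₁`. -/
def oddPrimitives : Submodule k H.carrier := H.primitives ⊓ LinearMap.ker H.pe

end HopfSuperalgebra

/-- A subspace `D` of a coalgebra with comultiplication `Δ` is a subcoalgebra
if `Δ(D) ⊆ D ⊗ D`. -/
def IsSubcoalgebraOf {k M : Type} [Field k] [AddCommGroup M] [Module k M]
    (Δ : M →ₗ[k] M ⊗[k] M) (D : Submodule k M) : Prop :=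
  ∀ a ∈ D, Δ a ∈ LinearMap.range (TensorProduct.map D.subtype D.subtype)

/-- The coradical of a coalgebra: the sum of all its simple subcoalgebras. -/
def coradicalOf {k M : Type} [Field k] [AddCommGroup M] [Module k M]
    (Δ : M →ₗ[k] M ⊗[k] M) : Submodule k M :=
  sSup {D | IsSubcoalgebraOf Δ D ∧ D ≠ ⊥ ∧
    ∀ E : Submodule k M, E ≤ D → IsSubcoalgebraOf Δ E → E = ⊥ ∨ E = D}

namespace HopfSuperalgebra

variable {k : Type} [Field k] (H : HopfSuperalgebra k)

/-- a Hopf superalgebra is irreducible if its coradical is `k·1`. -/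
def IsIrreducible : Prop := coradicalOf H.comul = Submodule.span k {(1 : H.carrier)}

/-- cosemisimplicity: the coradical is everything; equivalently all
super-comodules are semisimple, i.e. `SSp H` is linearly reductive. -/
def IsCosemisimple : Prop := coradicalOf H.comul = (⊤ : Submodule k H.carrier)

/-- connectedness of `Spec A₀`: the only even idempotents are `0` and `1`. -/
def IsConnected : Prop :=
  ∀ a : H.carrier, H.po a = 0 → a * a = a → a = 0 ∨ a = 1

/-- Morphisms of Hopf superalgebras. -/
@[ext]
structure Hom (H K : HopfSuperalgebra k) : Type where
  toLinearMap : H.carrier →ₗ[k] K.carrier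
  map_one' : toLinearMap 1 = 1
  map_mul' : ∀ a b, toLinearMap (a * b) = toLinearMap a * toLinearMap b
  map_pe' : ∀ a, toLinearMap (H.pe a) = K.pe (toLinearMap a)
  map_comul' : ∀ a, K.comul (toLinearMap a) =
    TensorProduct.map toLinearMap toLinearMap (H.comul a)
  map_counit' : ∀ a, K.counit (toLinearMap a) = H.counit a

instance : Category (HopfSuperalgebra k) where
  Hom A B := Hom A B
  id A :=
    { toLinearMap := LinearMap.id
      map_one' := rfl
      map_mul' := fun _ _ => rfl
      map_pe' := fun _ => rfl
      map_comul' := fun a => by simp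
      map_counit' := fun _ => rfl }
  comp {X Y Z} f g :=
    { toLinearMap := g.toLinearMap ∘ₗ f.toLinearMap
      map_one' := by simp [f.map_one', g.map_one']
      map_mul' := fun a b => by simp [f.map_mul', g.map_mul']
      map_pe' := fun a => by simp [f.map_pe', g.map_pe']
      map_comul' := fun a => by
        simp only [LinearMap.coe_comp, Function.comp_apply, g.map_comul', f.map_comul',
          TensorProduct.map_comp, LinearMap.comp_apply]
      map_counit' := fun a => by simp [f.map_counit', g.map_counit'] }
  id_comp f := by apply Hom.ext; rfl
  comp_id f := by apply Hom.ext; rfl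
  assoc f g h := by apply Hom.ext; rfl

end HopfSuperalgebra

/-! ### A unique maximal two-sided ideal in an Artinian ring is nilpotent -/

/-- If a proper two-sided ideal `m` of an Artinian ring contains every proper two-sided ideal, it
is nilpotent. Modulo the Jacobson radical `J` the ring is semisimple, so `m` has a left complement
there, which gives `e ∈ m` with `m (1 - e) ⊆ J`; were `m ⊄ J`, then `{r | m r ⊆ J}` would be a
proper two-sided ideal containing `1 - e`, hence `1 ∈ m`. -/
theorem isNilpotent_of_unique_maximal {R : Type*} [Ring R] [IsArtinianRing R] (m : Ideal R)
    (hm : ∀ a ∈ m, ∀ r, a * r ∈ m) (h1 : (1 : R) ∉ m)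
    (hmax : ∀ I : Ideal R, (∀ a ∈ I, ∀ r, a * r ∈ I) → (1 : R) ∉ I → I ≤ m) :
    IsNilpotent m := by
  obtain ⟨n, hn⟩ := IsSemiprimaryRing.isNilpotent (R := R)
  suffices hle : m ≤ Ring.jacobson R by
    refine ⟨n, ?_⟩
    rw [Submodule.zero_eq_bot, eq_bot_iff] at hn ⊢
    exact (Ideal.pow_right_mono hle n).trans hn
  by_contra hnot
  have hJ : ∀ a ∈ Ring.jacobson R, ∀ r, a * r ∈ Ring.jacobson R := fun a ha r =>
    Ideal.IsTwoSided.mul_mem_of_left r ha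
  let Q : Ideal R :=
    { carrier := {r | ∀ a ∈ m, a * r ∈ Ring.jacobson R}
      add_mem' := fun {x y} hx hy a ha => by
        rw [mul_add]; exact add_mem (hx a ha) (hy a ha)
      zero_mem' := fun a _ => by simp
      smul_mem' := fun s x hx a ha => by
        rw [smul_eq_mul, ← mul_assoc]; exact hx _ (hm a ha s) }
  have hQ : Q ≤ m := by
    refine hmax Q (fun a ha r b hb => ?_) (fun h => hnot fun a ha => by simpa using h a ha)
    rw [← mul_assoc]; exact hJ _ (ha b hb) r
  let π := Ideal.Quotient.mk (Ring.jacobson R)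
  let m' : Ideal (R ⧸ Ring.jacobson R) := m.map π
  have hsurj : Function.Surjective π := Ideal.Quotient.mk_surjective
  have hm' : ∀ x ∈ m', ∃ a ∈ m, π a = x := fun x hx =>
    (Ideal.mem_map_iff_of_surjective π hsurj).1 hx
  obtain ⟨L, hL⟩ := exists_isCompl m'
  obtain ⟨e, he, f, hf, hef⟩ := Submodule.mem_sup.1
    (show (1 : R ⧸ Ring.jacobson R) ∈ m' ⊔ L by rw [hL.sup_eq_top]; trivial)
  obtain ⟨e, hem, rfl⟩ := hm' e he
  have hQmem : 1 - e ∈ Q := by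
    intro a ha
    have h2 : π (a * (1 - e)) = π a * f := by
      rw [map_mul, map_sub, map_one, ← hef, add_sub_cancel_left]
    have h3 : π (a * (1 - e)) ∈ m' := Ideal.mem_map_of_mem _ (hm a ha _)
    have h4 : π (a * (1 - e)) ∈ L := by rw [h2]; exact L.mul_mem_left _ hf
    have h5 : π (a * (1 - e)) ∈ m' ⊓ L := ⟨h3, h4⟩
    rw [hL.inf_eq_bot] at h5
    exact Ideal.Quotient.eq_zero_iff_mem.1 h5
  apply h1
  have := add_mem (hQ hQmem) hem
  simpa using this

/-- The powers of the nilpotent ideal `m`, as a chain of ideals `P j = m ^ j`. -/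
theorem exists_chain_of_unique_maximal {R : Type*} [Ring R] [IsArtinianRing R] (m : Ideal R)
    (hm : ∀ a ∈ m, ∀ r, a * r ∈ m) (h1 : (1 : R) ∉ m)
    (hmax : ∀ I : Ideal R, (∀ a ∈ I, ∀ r, a * r ∈ I) → (1 : R) ∉ I → I ≤ m) :
    ∃ (n : ℕ) (P : ℕ → Ideal R), (1 : R) ∈ P 0 ∧ (∀ T ∈ P n, T = 0) ∧
      ∀ j, ∀ S ∈ m, ∀ T ∈ P j, S * T ∈ P (j + 1) := by
  obtain ⟨n, hn⟩ := isNilpotent_of_unique_maximal m hm h1 hmax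
  refine ⟨n, fun j => m ^ j, ?_, fun T hT => ?_, fun j S hS T hT => ?_⟩
  · change (1 : R) ∈ m ^ 0
    rw [Submodule.pow_zero, Ideal.one_eq_top]; trivial
  · change T ∈ m ^ n at hT
    rw [hn] at hT
    simpa using hT
  · change S * T ∈ m ^ (j + 1)
    haveI : m.IsTwoSided := ⟨fun r ha => hm _ ha r⟩
    rw [Ideal.IsTwoSided.pow_succ]
    exact Ideal.mul_mem_mul hS hT

/-! ### Locally nilpotent families of operators -/

/-- `KilledBy 𝒯 n x`: every composite of `n` operators from the set `𝒯` annihilates `x`. -/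
def KilledBy {k V : Type*} [Field k] [AddCommGroup V] [Module k V]
    (𝒯 : Set (Module.End k V)) : ℕ → V → Prop
  | 0, x => x = 0
  | n + 1, x => ∀ T ∈ 𝒯, KilledBy 𝒯 n (T x)

section KilledBy

variable {k V : Type*} [Field k] [AddCommGroup V] [Module k V] (𝒯 : Set (Module.End k V))

theorem KilledBy.zero (n : ℕ) : KilledBy 𝒯 n (0 : V) := by
  induction n with
  | zero => rfl
  | succ n ih => intro T _; rw [map_zero]; exact ih

variable {𝒯}

theorem KilledBy.add {n : ℕ} {x y : V} (hx : KilledBy 𝒯 n x) (hy : KilledBy 𝒯 n y) :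
    KilledBy 𝒯 n (x + y) := by
  induction n generalizing x y with
  | zero => simp only [KilledBy] at *; simp [hx, hy]
  | succ n ih => intro T hT; rw [map_add]; exact ih (hx T hT) (hy T hT)

theorem KilledBy.smul {n : ℕ} {x : V} (c : k) (hx : KilledBy 𝒯 n x) :
    KilledBy 𝒯 n (c • x) := by
  induction n generalizing x with
  | zero => simp only [KilledBy] at *; simp [hx]
  | succ n ih => intro T hT; rw [map_smul]; exact ih (hx T hT)

theorem KilledBy.succ {n : ℕ} {x : V} (hx : KilledBy 𝒯 n x) : KilledBy 𝒯 (n + 1) x := by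
  induction n generalizing x with
  | zero =>
    simp only [KilledBy] at *
    intro T _; rw [hx, map_zero]
  | succ n ih => exact fun T hT => ih (hx T hT)

theorem KilledBy.mono {n n' : ℕ} (h : n ≤ n') {x : V} (hx : KilledBy 𝒯 n x) :
    KilledBy 𝒯 n' x := by
  induction h with
  | refl => exact hx
  | step _ ih => exact ih.succ

/-- Local nilpotency is uniform on finite-dimensional subspaces. -/
theorem KilledBy.uniform (h : ∀ x : V, ∃ n, KilledBy 𝒯 n x) (W : Submodule k V)
    (hW : W.FG) : ∃ n, ∀ x ∈ W, KilledBy 𝒯 n x := by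
  obtain ⟨s, rfl⟩ := hW
  choose ν hν using h
  refine ⟨s.sup ν, fun x hx => ?_⟩
  induction hx using Submodule.span_induction with
  | mem x hx => exact (hν x).mono (Finset.le_sup hx)
  | zero => exact KilledBy.zero _ _
  | add x y _ _ hx hy => exact hx.add hy
  | smul c x _ hx => exact hx.smul c

/-- A nonzero stable subspace on which the operators are locally nilpotent contains a nonzero
vector killed by all of them. -/
theorem KilledBy.exists_fixed (M : Submodule k V) (hM : ∀ T ∈ 𝒯, ∀ x ∈ M, T x ∈ M)
    {n : ℕ} {x : V} (hx : KilledBy 𝒯 n x) (hxM : x ∈ M) (hx0 : x ≠ 0) :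
    ∃ y ∈ M, y ≠ 0 ∧ ∀ T ∈ 𝒯, T y = 0 := by
  induction n generalizing x with
  | zero => exact absurd hx hx0
  | succ n ih =>
    by_cases h : ∀ T ∈ 𝒯, T x = 0
    · exact ⟨x, hxM, hx0, h⟩
    · push Not at h
      obtain ⟨T, hT, hTx⟩ := h
      exact ih (hx T hT) (hM T hT x hxM) hTx

end KilledBy

/-! ### The two commuting actions of the dual on a coalgebra -/

/-- The properties of the actions `L f = (f ⊗ id) Δ` and `R g = (id ⊗ g) Δ` of the dual space on a
coalgebra with group-like element `u` that are used below, in a form symmetric in `L` and `R`. -/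
structure DualActions {k C : Type*} [Field k] [AddCommGroup C] [Module k C] (u : C)
    (L R : Module.Dual k C → Module.End k C) : Prop where
  comm : ∀ (f g : Module.Dual k C) (c : C), L f (R g c) = R g (L f c)
  adj : ∀ (f g : Module.Dual k C) (c : C), g (L f c) = f (R g c)
  finL : ∀ c, ∃ W : Submodule k C, W.FG ∧ ∀ f, L f c ∈ W
  finR : ∀ c, ∃ W : Submodule k C, W.FG ∧ ∀ f, R f c ∈ W
  oneL : ∀ f, L f u = f u • u
  oneR : ∀ f, R f u = f u • u
  counit : ∃ ε, (∀ c, L ε c = c) ∧ ∀ c, R ε c = c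

namespace DualActions

variable {k C : Type*} [Field k] [AddCommGroup C] [Module k C] {u : C}
  {L R : Module.Dual k C → Module.End k C}

theorem symm (h : DualActions u L R) : DualActions u R L where
  comm f g c := (h.comm g f c).symm
  adj f g c := (h.adj g f c).symm
  finL := h.finR
  finR := h.finL
  oneL := h.oneR
  oneR := h.oneL
  counit := let ⟨ε, h1, h2⟩ := h.counit; ⟨ε, h2, h1⟩

theorem ext_dual {x y : C} (h : ∀ f : Module.Dual k C, f x = f y) : x = y := by
  rw [← sub_eq_zero, ← Module.forall_dual_apply_eq_zero_iff k]
  intro f; rw [map_sub, h, sub_self]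

theorem mulL (h : DualActions u L R) (f g c) : L f (L g c) = L (f ∘ₗ L g) c :=
  ext_dual (k := k) fun φ => by rw [h.adj, ← h.comm, h.adj (f ∘ₗ L g)]; rfl

theorem addL (h : DualActions u L R) (f g c) : L (f + g) c = L f c + L g c :=
  ext_dual (k := k) fun φ => by rw [h.adj, map_add, h.adj, h.adj]; rfl

theorem smulL (h : DualActions u L R) (a : k) (f c) : L (a • f) c = a • L f c :=
  ext_dual (k := k) fun φ => by rw [h.adj, map_smul, h.adj]; rfl

theorem subL (h : DualActions u L R) (f g) (a : k) (c) :
    L (f - a • g) c = L f c - a • L g c :=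
  ext_dual (k := k) fun φ => by rw [h.adj, map_sub, map_smul, h.adj, h.adj]; rfl

/-- The subspaces stable under both actions are the subcoalgebras; each vector lies in a
finite-dimensional one. -/
theorem exists_fg (h : DualActions u L R) (c : C) : ∃ E : Submodule k C, E.FG ∧ c ∈ E ∧
    (∀ f, ∀ x ∈ E, L f x ∈ E) ∧ (∀ f, ∀ x ∈ E, R f x ∈ E) := by
  obtain ⟨W, hW, hWc⟩ := h.finL c
  choose X hX hXc using h.finR
  obtain ⟨s, hs⟩ := hW
  let E := Submodule.span k {y | ∃ f g, y = R g (L f c)}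
  have hsub : ∀ w ∈ W, ∀ g, R g w ∈ s.sup X := by
    intro w hw g
    rw [← hs] at hw
    induction hw using Submodule.span_induction with
    | mem x hx => exact Finset.le_sup (f := X) hx (hXc x g)
    | zero => rw [map_zero]; exact zero_mem _
    | add x y _ _ hx hy => rw [map_add]; exact add_mem hx hy
    | smul a x _ hx => rw [map_smul]; exact Submodule.smul_mem _ _ hx
  have hfg : (s.sup X).FG := Submodule.fg_finset_sup s X fun i _ => hX i
  have hE : E ≤ s.sup X := by
    refine Submodule.span_le.2 ?_
    rintro _ ⟨f, g, rfl⟩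
    exact hsub _ (hWc f) g
  obtain ⟨ε, he1, he2⟩ := h.counit
  refine ⟨E, ?_, Submodule.subset_span ⟨ε, ε, by rw [he1, he2]⟩, ?_, ?_⟩
  · haveI : FiniteDimensional k (s.sup X : Submodule k C) := Module.Finite.iff_fg.2 hfg
    haveI := Submodule.finiteDimensional_of_le hE
    exact Module.Finite.iff_fg.1 this
  · intro f x hx
    refine (Submodule.span_le (p := E.comap (L f))).2 ?_ hx
    rintro _ ⟨f', g', rfl⟩
    exact Submodule.subset_span ⟨f ∘ₗ L f', g', by rw [h.comm, h.mulL]⟩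
  · intro g x hx
    refine (Submodule.span_le (p := E.comap (R g))).2 ?_ hx
    rintro _ ⟨f', g', rfl⟩
    exact Submodule.subset_span ⟨f', g ∘ₗ R g', by rw [h.symm.mulL]⟩

/-- If every nonzero finite-dimensional subcoalgebra contains `u`, the functionals vanishing at `u`
act locally nilpotently: on a finite-dimensional subcoalgebra `E` they form a two-sided ideal of
the Artinian ring `E*` which contains every proper two-sided ideal, since the annihilator in `E` of
such an ideal is a nonzero subcoalgebra. -/
theorem killedBy (h : DualActions u L R) (hu : u ≠ 0)
    (hirr : ∀ E : Submodule k C, E.FG → E ≠ ⊥ → (∀ f, ∀ x ∈ E, L f x ∈ E) →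
      (∀ f, ∀ x ∈ E, R f x ∈ E) → u ∈ E) (c : C) :
    ∃ n, KilledBy {T | ∃ f, f u = 0 ∧ T = L f} n c := by
  obtain ⟨E, hfg, hcE, hEL, hER⟩ := h.exists_fg c
  by_cases hE0 : E = ⊥
  · exact ⟨0, by simpa [hE0, KilledBy] using hcE⟩
  haveI : FiniteDimensional k E := Module.Finite.iff_fg.2 hfg
  obtain ⟨ε, he1, he2⟩ := h.counit
  let A : Subalgebra k (Module.End k E) :=
    { carrier := {T | ∃ f, ∀ x : E, (T x : C) = L f x}
      mul_mem' := by
        rintro S T ⟨f, hf⟩ ⟨g, hg⟩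
        exact ⟨f ∘ₗ L g, fun x => by rw [Module.End.mul_apply, hf, hg, h.mulL]⟩
      add_mem' := by
        rintro S T ⟨f, hf⟩ ⟨g, hg⟩
        exact ⟨f + g, fun x => by
          rw [LinearMap.add_apply, Submodule.coe_add, hf, hg, h.addL]⟩
      algebraMap_mem' := fun a => ⟨a • ε, fun x => by
        rw [h.smulL, he1, Module.algebraMap_end_apply]; rfl⟩ }
  haveI : IsArtinianRing A := IsArtinianRing.of_finite k A
  let m : Ideal A :=
    { carrier := {T | ∃ f, f u = 0 ∧ ∀ x : E, (T.1 x : C) = L f x}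
      add_mem' := by
        rintro S T ⟨f, hf0, hf⟩ ⟨g, hg0, hg⟩
        refine ⟨f + g, by simp [hf0, hg0], fun x => ?_⟩
        rw [h.addL, ← hf, ← hg]; rfl
      zero_mem' := ⟨0, rfl, fun x => by
        have := h.smulL 0 0 (x : C)
        rw [zero_smul, zero_smul] at this
        rw [this]; rfl⟩
      smul_mem' := by
        rintro ⟨S, g, hg⟩ T ⟨f, hf0, hf⟩
        refine ⟨g ∘ₗ L f, by simp [h.oneL, hf0], fun x => ?_⟩
        rw [← h.mulL, ← hf, ← hg]; rfl }
  have hproper : ∀ I : Ideal A, (∀ a ∈ I, ∀ r, a * r ∈ I) → (1 : A) ∉ I → I ≤ m ∧ u ∈ E := by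
    intro I hI hI1
    let X : Submodule k C :=
      { carrier := {x | ∃ hx : x ∈ E, ∀ T ∈ I, ε (T.1 ⟨x, hx⟩ : C) = 0}
        add_mem' := by
          rintro x y ⟨hx, hx'⟩ ⟨hy, hy'⟩
          refine ⟨add_mem hx hy, fun T hT => ?_⟩
          have : (⟨x + y, add_mem hx hy⟩ : E) = ⟨x, hx⟩ + ⟨y, hy⟩ := rfl
          rw [this, map_add, Submodule.coe_add, map_add, hx' T hT, hy' T hT, add_zero]
        zero_mem' := ⟨zero_mem _, fun T _ => by
          have : (⟨0, zero_mem _⟩ : E) = 0 := rfl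
          rw [this, map_zero, Submodule.coe_zero, map_zero]⟩
        smul_mem' := by
          rintro a x ⟨hx, hx'⟩
          refine ⟨E.smul_mem a hx, fun T hT => ?_⟩
          have : (⟨a • x, E.smul_mem a hx⟩ : E) = a • ⟨x, hx⟩ := rfl
          rw [this, map_smul, Submodule.coe_smul, map_smul, hx' T hT, smul_zero] }
    have hXE : X ≤ E := fun x hx => hx.1
    have hXfg : X.FG := by
      haveI := Submodule.finiteDimensional_of_le hXE
      exact Module.Finite.iff_fg.1 this
    have hX0 : X ≠ ⊥ := by
      intro hX0
      -- the functionals `ε ∘ T`, `T ∈ I`, separate points of `E`, so one of them is `ε`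
      let Ψ : A →ₗ[k] Module.Dual k E :=
        { toFun := fun T => ε ∘ₗ E.subtype ∘ₗ T.1
          map_add' := fun S T => by ext x; simp
          map_smul' := fun a T => by ext x; simp }
      obtain ⟨I', hI'⟩ : ∃ I' : Submodule k (Module.Dual k E), ∀ φ, φ ∈ I' ↔ ∃ T ∈ I, Ψ T = φ :=
        ⟨(I.restrictScalars k).map Ψ, fun φ => Iff.rfl⟩
      have htop : I' = ⊤ := by
        rw [← Subspace.dualCoannihilator_dualAnnihilator_eq (W := I')]
        have : I'.dualCoannihilator = ⊥ := by
          rw [eq_bot_iff]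
          intro x hx
          rw [Submodule.mem_dualCoannihilator] at hx
          have : (x : C) ∈ X := ⟨x.2, fun T hT => hx (Ψ T) ((hI' _).2 ⟨T, hT, rfl⟩)⟩
          rw [hX0, Submodule.mem_bot] at this
          simpa using this
        rw [this, Submodule.dualAnnihilator_bot]
      obtain ⟨T, hT, hTe⟩ := (hI' (ε ∘ₗ E.subtype)).1 (htop ▸ Submodule.mem_top)
      apply hI1
      have : T = 1 := by
        obtain ⟨T, f, hf⟩ := T
        apply Subtype.ext
        ext x
        change (T x : C) = x
        refine ext_dual (k := k) fun φ => ?_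
        have hx := LinearMap.congr_fun hTe ⟨R φ x, hER φ _ x.2⟩
        change ε (T ⟨R φ x, _⟩ : C) = ε (R φ x) at hx
        rw [hf, h.adj, he2] at hx
        rw [hf, h.adj, hx, ← h.adj, he1]
      rw [← this]; exact hT
    have hXL : ∀ f, ∀ x ∈ X, L f x ∈ X := by
      rintro f x ⟨hx, hx'⟩
      refine ⟨hEL f x hx, fun T hT => ?_⟩
      exact hx' (T * ⟨(L f).restrict (hEL f), f, fun _ => rfl⟩) (hI T hT _)
    have hXR : ∀ f, ∀ x ∈ X, R f x ∈ X := by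
      rintro g x ⟨hx, hx'⟩
      refine ⟨hER g x hx, ?_⟩
      rintro ⟨T, f, hf⟩ hT
      have h2 := hx' (⟨(L g).restrict (hEL g), g, fun _ => rfl⟩ * ⟨T, f, hf⟩)
        (I.mul_mem_left _ hT)
      change ε (L g (T ⟨x, hx⟩ : C)) = 0 at h2
      rw [h.adj, he2, hf] at h2
      change ε (T ⟨R g x, _⟩ : C) = 0
      rw [hf, h.adj, he2]
      rw [h.adj] at h2
      exact h2
    obtain ⟨huE, hu'⟩ := hirr X hXfg hX0 hXL hXR
    refine ⟨?_, huE⟩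
    rintro ⟨T, f, hf⟩ hT
    refine ⟨f, ?_, hf⟩
    have h2 := hu' _ hT
    change ε (T ⟨u, huE⟩ : C) = 0 at h2
    rwa [hf, h.adj, he2] at h2
  have h10 : (1 : A) ∉ (⊥ : Ideal A) := by
    obtain ⟨x, hx, hx0⟩ := Submodule.exists_mem_ne_zero_of_ne_bot hE0
    intro h1
    have : (1 : Module.End k E) = 0 := congrArg Subtype.val ((Submodule.mem_bot A).1 h1)
    exact hx0 (congrArg Subtype.val (LinearMap.congr_fun this ⟨x, hx⟩))
  have huE : u ∈ E := (hproper ⊥ (fun a ha r => by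
    rw [Submodule.mem_bot] at ha ⊢; rw [ha, zero_mul]) h10).2
  have hmtwo : ∀ a ∈ m, ∀ r, a * r ∈ m := by
    rintro T ⟨f, hf0, hf⟩ ⟨S, g, hg⟩
    refine ⟨f ∘ₗ L g, by simp [h.oneL, hf0], fun x => ?_⟩
    rw [← h.mulL, ← hg, ← hf]; rfl
  have hm1 : (1 : A) ∉ m := by
    rintro ⟨f, hf0, hf⟩
    have := hf ⟨u, huE⟩
    rw [h.oneL, hf0, zero_smul] at this
    exact hu this
  have hmax : ∀ I : Ideal A, (∀ a ∈ I, ∀ r, a * r ∈ I) → (1 : A) ∉ I → I ≤ m :=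
    fun I hI hI1 => (hproper I hI hI1).1
  obtain ⟨n, P, hP1, hP0, hP⟩ := exists_chain_of_unique_maximal (R := A) m hmtwo hm1 hmax
  have key : ∀ i j : ℕ, i + j = n → ∀ T : A, T ∈ P j → ∀ x : E,
      KilledBy {T | ∃ f, f u = 0 ∧ T = L f} i (T.1 x : C) := by
    intro i
    induction i with
    | zero =>
      intro j hj T hT x
      have hT0 : T = 0 := hP0 T (by rwa [show j = n by omega] at hT)
      rw [hT0]; rfl
    | succ i ih =>
      rintro j hj T hT x _ ⟨f, hf0, rfl⟩
      have hmem : (⟨(L f).restrict (hEL f), f, fun _ => rfl⟩ : A) * T ∈ P (j + 1) :=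
        hP j _ ⟨f, hf0, fun _ => rfl⟩ T hT
      exact ih (j + 1) (by omega) _ hmem x
  refine ⟨n, ?_⟩
  exact key n 0 (by omega) 1 hP1 ⟨c, hcE⟩

end DualActions

/-! ### Slices of tensors -/

section Slices

variable {k V W : Type*} [Field k] [AddCommGroup V] [Module k V] [AddCommGroup W] [Module k W]

/-- The slice `(f ⊗ id) : V ⊗ W → W`. -/
def sliceL (f : Module.Dual k V) : V ⊗[k] W →ₗ[k] W :=
  (TensorProduct.lid k W).toLinearMap ∘ₗ LinearMap.rTensor W f

/-- The slice `(id ⊗ g) : V ⊗ W → V`. -/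
def sliceR (g : Module.Dual k W) : V ⊗[k] W →ₗ[k] V :=
  (TensorProduct.rid k V).toLinearMap ∘ₗ LinearMap.lTensor V g

@[simp] theorem sliceL_tmul (f : Module.Dual k V) (v : V) (w : W) :
    sliceL f (v ⊗ₜ[k] w) = f v • w := by simp [sliceL]

@[simp] theorem sliceR_tmul (g : Module.Dual k W) (v : V) (w : W) :
    sliceR g (v ⊗ₜ[k] w) = g w • v := by simp [sliceR]

theorem sliceL_map {V' W' : Type*} [AddCommGroup V'] [Module k V'] [AddCommGroup W'] [Module k W']
    (f : Module.Dual k V') (α : V →ₗ[k] V') (β : W →ₗ[k] W') (t : V ⊗[k] W) :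
    sliceL f (TensorProduct.map α β t) = β (sliceL (f ∘ₗ α) t) := by
  induction t with
  | zero => simp
  | tmul v w => simp
  | add x y hx hy => simp [hx, hy]

theorem sliceR_map {V' W' : Type*} [AddCommGroup V'] [Module k V'] [AddCommGroup W'] [Module k W']
    (f : Module.Dual k W') (α : V →ₗ[k] V') (β : W →ₗ[k] W') (t : V ⊗[k] W) :
    sliceR f (TensorProduct.map α β t) = α (sliceR (f ∘ₗ β) t) := by
  induction t with
  | zero => simp
  | tmul v w => simp
  | add x y hx hy => simp [hx, hy]

theorem sliceR_sliceL (f : Module.Dual k V) (g : Module.Dual k W) (t : V ⊗[k] W) :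
    g (sliceL f t) = f (sliceR g t) := by
  induction t with
  | zero => simp
  | tmul v w => simp [mul_comm]
  | add x y hx hy => simp [hx, hy]

theorem sliceL_ext {t t' : V ⊗[k] W} (h : ∀ f : Module.Dual k V, sliceL f t = sliceL f t') :
    t = t' := by
  rw [← sub_eq_zero]
  have h' : ∀ f : Module.Dual k V, sliceL f (t - t') = 0 := fun f => by rw [map_sub, h, sub_self]
  generalize t - t' = s at h'
  classical
  let b := Module.Basis.ofVectorSpace k V
  apply (TensorProduct.equivFinsuppOfBasisLeft (N := W) b).injective
  rw [map_zero]
  ext i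
  rw [Finsupp.zero_apply, ← h' (b.coord i)]
  clear h h'
  induction s with
  | zero => simp
  | tmul v w => simp
  | add x y hx hy => simp [hx, hy]

theorem sliceR_ext {t t' : V ⊗[k] W} (h : ∀ g : Module.Dual k W, sliceR g t = sliceR g t') :
    t = t' :=
  sliceL_ext fun f => DualActions.ext_dual (k := k) fun g => by
    rw [sliceR_sliceL, sliceR_sliceL, h]

theorem exists_retraction (D : Submodule k V) : ∃ π : V →ₗ[k] D, ∀ x ∈ D, (π x : V) = x := by
  obtain ⟨π, hπ⟩ := D.subtype.exists_leftInverse_of_injective D.ker_subtype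
  exact ⟨π, fun x hx => congrArg Subtype.val (LinearMap.congr_fun hπ ⟨x, hx⟩)⟩

theorem mem_range_of_sliceL (D : Submodule k W) {t : V ⊗[k] W}
    (h : ∀ f : Module.Dual k V, sliceL f t ∈ D) :
    ∃ s : V ⊗[k] D, TensorProduct.map LinearMap.id D.subtype s = t := by
  obtain ⟨π, hπ⟩ := exists_retraction D
  refine ⟨TensorProduct.map LinearMap.id π t, sliceL_ext fun f => ?_⟩
  rw [sliceL_map, sliceL_map]
  exact hπ _ (h f)

theorem mem_range_of_sliceR (D : Submodule k V) {t : V ⊗[k] W}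
    (h : ∀ g : Module.Dual k W, sliceR g t ∈ D) :
    ∃ s : D ⊗[k] W, TensorProduct.map D.subtype LinearMap.id s = t := by
  obtain ⟨π, hπ⟩ := exists_retraction D
  refine ⟨TensorProduct.map π LinearMap.id t, sliceR_ext fun f => ?_⟩
  rw [sliceR_map, sliceR_map]
  exact hπ _ (h f)

/-- The slices of a fixed tensor span a finite-dimensional space. -/
theorem exists_fg_sliceL (t : V ⊗[k] W) :
    ∃ X : Submodule k W, X.FG ∧ ∀ f : Module.Dual k V, sliceL f t ∈ X := by
  induction t with
  | zero => exact ⟨⊥, Submodule.fg_bot, fun f => by simp⟩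
  | tmul v w =>
    exact ⟨k ∙ w, Submodule.fg_span_singleton w, fun f => by
      rw [sliceL_tmul]; exact Submodule.smul_mem _ _ (Submodule.mem_span_singleton_self w)⟩
  | add x y hx hy =>
    obtain ⟨X, hX, hx⟩ := hx
    obtain ⟨Y, hY, hy⟩ := hy
    exact ⟨X ⊔ Y, hX.sup hY, fun f => by
      rw [map_add]; exact Submodule.add_mem_sup (hx f) (hy f)⟩

theorem exists_fg_sliceR (t : V ⊗[k] W) :
    ∃ X : Submodule k V, X.FG ∧ ∀ g : Module.Dual k W, sliceR g t ∈ X := by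
  induction t with
  | zero => exact ⟨⊥, Submodule.fg_bot, fun f => by simp⟩
  | tmul v w =>
    exact ⟨k ∙ v, Submodule.fg_span_singleton v, fun f => by
      rw [sliceR_tmul]; exact Submodule.smul_mem _ _ (Submodule.mem_span_singleton_self v)⟩
  | add x y hx hy =>
    obtain ⟨X, hX, hx⟩ := hx
    obtain ⟨Y, hY, hy⟩ := hy
    exact ⟨X ⊔ Y, hX.sup hY, fun f => by
      rw [map_add]; exact Submodule.add_mem_sup (hx f) (hy f)⟩

end Slices

/-! ### Subcoalgebras and irreducibility -/

theorem isSubcoalgebraOf_iff {k M : Type} [Field k] [AddCommGroup M] [Module k M]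
    (Δ : M →ₗ[k] M ⊗[k] M) (D : Submodule k M) :
    IsSubcoalgebraOf Δ D ↔
      (∀ f, ∀ a ∈ D, sliceL f (Δ a) ∈ D) ∧ ∀ f, ∀ a ∈ D, sliceR f (Δ a) ∈ D := by
  constructor
  · intro h
    constructor
    · intro f a ha
      obtain ⟨t, ht⟩ := h a ha
      rw [← ht, sliceL_map]
      exact Subtype.coe_prop _
    · intro f a ha
      obtain ⟨t, ht⟩ := h a ha
      rw [← ht, sliceR_map]
      exact Subtype.coe_prop _
  · rintro ⟨hL, hR⟩ a ha
    obtain ⟨π, hπ⟩ := exists_retraction D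
    refine ⟨TensorProduct.map π π (Δ a), sliceL_ext fun f => ?_⟩
    rw [sliceL_map, sliceL_map]
    have h1 : sliceL ((f ∘ₗ D.subtype) ∘ₗ π) (Δ a) = sliceL f (Δ a) :=
      DualActions.ext_dual (k := k) fun φ => by
        rw [sliceR_sliceL, sliceR_sliceL]
        exact congrArg f (hπ _ (hR φ a ha))
    rw [h1]
    exact hπ _ (hL f a ha)

namespace HopfSuperalgebra

variable {k : Type} [Field k] (H : HopfSuperalgebra k)

/-- `(f ⊗ id) Δ`. -/
def actL (f : Module.Dual k H.carrier) : Module.End k H.carrier := sliceL f ∘ₗ H.comul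

/-- `(id ⊗ g) Δ`. -/
def actR (g : Module.Dual k H.carrier) : Module.End k H.carrier := sliceR g ∘ₗ H.comul

theorem actL_apply (f : Module.Dual k H.carrier) (a) : H.actL f a = sliceL f (H.comul a) := rfl

theorem actR_apply (f : Module.Dual k H.carrier) (a) : H.actR f a = sliceR f (H.comul a) := rfl

theorem actL_counit (a) : H.actL H.counit a = a := H.counit_comul a

theorem actR_counit (a) : H.actR H.counit a = a := H.comul_counit a

theorem dualActions : DualActions (1 : H.carrier) H.actL H.actR where
  comm f g c := by
    have h1 : ∀ t : H.carrier ⊗[k] H.carrier, sliceL f (H.comul (sliceR g t)) =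
        sliceR g (sliceL f (TensorProduct.assoc k H.carrier H.carrier H.carrier
          (TensorProduct.map H.comul LinearMap.id t))) := by
      intro t
      induction t with
      | zero => simp
      | add x y hx hy => simp only [map_add, hx, hy]
      | tmul a b =>
        rw [sliceR_tmul, map_smul, map_smul, TensorProduct.map_tmul]
        generalize H.comul a = s
        induction s with
        | zero => simp
        | add x y hx hy => simp only [map_add, smul_add, hx, hy, TensorProduct.add_tmul]
        | tmul x y =>
          simp only [TensorProduct.assoc_tmul, sliceL_tmul, sliceR_tmul, map_smul, LinearMap.id_apply]
          rw [smul_comm]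
    have h2 : ∀ t : H.carrier ⊗[k] H.carrier, sliceR g (H.comul (sliceL f t)) =
        sliceR g (sliceL f (TensorProduct.map LinearMap.id H.comul t)) := by
      intro t
      induction t with
      | zero => simp
      | add x y hx hy => simp only [map_add, hx, hy]
      | tmul a b => simp
    change sliceL f (H.comul (sliceR g (H.comul c))) = sliceR g (H.comul (sliceL f (H.comul c)))
    rw [h1, h2, H.coassoc]
  adj f g c := sliceR_sliceL f g _
  finL c := exists_fg_sliceL _
  finR c := exists_fg_sliceR _
  oneL f := by rw [actL_apply, H.comul_one, sliceL_tmul]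
  oneR f := by rw [actR_apply, H.comul_one, sliceR_tmul]
  counit := ⟨H.counit, H.actL_counit, H.actR_counit⟩

theorem one_ne_zero' : (1 : H.carrier) ≠ 0 := fun h => by
  have := H.counit_one
  rw [h, map_zero] at this
  exact zero_ne_one this

/-- In an irreducible Hopf superalgebra every nonzero finite-dimensional subcoalgebra contains
`1`: a minimal nonzero subcoalgebra is simple, hence lies in the coradical. -/
theorem IsIrreducible.one_mem (h : H.IsIrreducible) (E : Submodule k H.carrier) (hE : E.FG)
    (hE0 : E ≠ ⊥) (hL : ∀ f, ∀ x ∈ E, H.actL f x ∈ E) (hR : ∀ f, ∀ x ∈ E, H.actR f x ∈ E) :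
    (1 : H.carrier) ∈ E := by
  induction hn : Module.finrank k E using Nat.strong_induction_on generalizing E with
  | _ n ih =>
  by_cases hs : ∀ X : Submodule k H.carrier, X ≤ E → IsSubcoalgebraOf H.comul X → X = ⊥ ∨ X = E
  · have hle : E ≤ Submodule.span k {(1 : H.carrier)} := by
      rw [← h]
      exact le_sSup ⟨(isSubcoalgebraOf_iff _ _).2 ⟨hL, hR⟩, hE0, hs⟩
    obtain ⟨x, hx, hx0⟩ := Submodule.exists_mem_ne_zero_of_ne_bot hE0
    obtain ⟨c, rfl⟩ := Submodule.mem_span_singleton.1 (hle hx)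
    have hc : c ≠ 0 := fun hc => hx0 (by rw [hc, zero_smul])
    exact (Submodule.smul_mem_iff _ hc).1 hx
  · push Not at hs
    obtain ⟨X, hXE, hX, hX0, hXne⟩ := hs
    haveI : FiniteDimensional k E := Module.Finite.iff_fg.2 hE
    haveI := Submodule.finiteDimensional_of_le hXE
    obtain ⟨hXL, hXR⟩ := (isSubcoalgebraOf_iff _ _).1 hX
    exact hXE (ih _ (hn ▸ Submodule.finrank_lt_finrank_of_lt (lt_of_le_of_ne hXE hXne)) X
      (Module.Finite.iff_fg.1 this) hX0 hXL hXR rfl)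

theorem IsIrreducible.killedBy (h : H.IsIrreducible) (c : H.carrier) :
    ∃ n, KilledBy {T | ∃ f : Module.Dual k H.carrier, f 1 = 0 ∧ T = H.actL f} n c :=
  H.dualActions.killedBy H.one_ne_zero' (h.one_mem H) c

theorem eq_of_fixed {V : Type*} [AddCommGroup V] [Module k V]
    {T : Module.Dual k H.carrier → V} {y : V}
    (hadd : ∀ f a, T (f - (a : k) • H.counit) = T f - a • T H.counit) (hε : T H.counit = y)
    (h : ∀ f, f 1 = 0 → T f = 0) (f) : T f = f 1 • y := by
  have := h (f - f 1 • H.counit) (by simp [H.counit_one])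
  rw [hadd, hε, sub_eq_zero] at this
  exact this

/-- Local nilpotency of the augmentation ideal of the dual forces every nonzero subspace stable
under the left action to contain `1`. -/
theorem one_mem_of_killedBy
    (h : ∀ c, ∃ n, KilledBy {T | ∃ f : Module.Dual k H.carrier, f 1 = 0 ∧ T = H.actL f} n c)
    (E : Submodule k H.carrier) (hE0 : E ≠ ⊥) (hL : ∀ f, ∀ x ∈ E, H.actL f x ∈ E) :
    (1 : H.carrier) ∈ E := by
  obtain ⟨x, hx, hx0⟩ := Submodule.exists_mem_ne_zero_of_ne_bot hE0
  obtain ⟨n, hn⟩ := h x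
  obtain ⟨y, hy, hy0, hfix⟩ := hn.exists_fixed E (by rintro _ ⟨f, _, rfl⟩; exact hL f) hx hx0
  have hy1 : y = H.counit y • 1 := DualActions.ext_dual (k := k) fun f => by
    have h1 : H.actL f y = f 1 • y :=
      H.eq_of_fixed (T := fun f => H.actL f y)
        (fun f a => H.dualActions.subL f _ a y)
        (H.actL_counit y) (fun f hf => hfix _ ⟨f, hf, rfl⟩) f
    have h2 := congrArg H.counit h1
    rw [H.dualActions.adj, H.actR_counit] at h2
    rw [h2]; simp [mul_comm]
  have hc : H.counit y ≠ 0 := fun hc => hy0 (by rw [hy1, hc, zero_smul])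
  rw [hy1] at hy
  exact (Submodule.smul_mem_iff _ hc).1 hy

theorem IsIrreducible.one_mem_of_actR (h : H.IsIrreducible) (E : Submodule k H.carrier)
    (hE0 : E ≠ ⊥) (hR : ∀ f, ∀ x ∈ E, H.actR f x ∈ E) : (1 : H.carrier) ∈ E := by
  obtain ⟨x, hx, hx0⟩ := Submodule.exists_mem_ne_zero_of_ne_bot hE0
  obtain ⟨n, hn⟩ := H.dualActions.symm.killedBy H.one_ne_zero'
    (fun E h1 h2 h3 h4 => h.one_mem H E h1 h2 h4 h3) x
  obtain ⟨y, hy, hy0, hfix⟩ := hn.exists_fixed E (by rintro _ ⟨f, _, rfl⟩; exact hR f) hx hx0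
  have hy1 : y = H.counit y • 1 := DualActions.ext_dual (k := k) fun f => by
    have h1 : H.actR f y = f 1 • y :=
      H.eq_of_fixed (T := fun f => H.actR f y)
        (fun f a => H.dualActions.symm.subL f _ a y)
        (H.actR_counit y) (fun f hf => hfix _ ⟨f, hf, rfl⟩) f
    have h2 := congrArg H.counit h1
    rw [← H.dualActions.adj, H.actL_counit] at h2
    rw [h2]; simp [mul_comm]
  have hc : H.counit y ≠ 0 := fun hc => hy0 (by rw [hy1, hc, zero_smul])
  rw [hy1] at hy
  exact (Submodule.smul_mem_iff _ hc).1 hy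

/-- If every nonzero subcoalgebra contains `1`, then `k·1` is the only simple one. -/
theorem isIrreducible_of_one_mem
    (h : ∀ E : Submodule k H.carrier, E ≠ ⊥ → (∀ f, ∀ x ∈ E, H.actL f x ∈ E) →
      (∀ f, ∀ x ∈ E, H.actR f x ∈ E) → (1 : H.carrier) ∈ E) : H.IsIrreducible := by
  have hsub : IsSubcoalgebraOf H.comul (Submodule.span k {(1 : H.carrier)}) := by
    refine (isSubcoalgebraOf_iff _ _).2 ⟨?_, ?_⟩ <;> intro f a ha <;>
      obtain ⟨c, rfl⟩ := Submodule.mem_span_singleton.1 ha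
    · rw [map_smul, map_smul, H.comul_one, sliceL_tmul]
      exact Submodule.smul_mem _ _ (Submodule.smul_mem _ _ (Submodule.mem_span_singleton_self _))
    · rw [map_smul, map_smul, H.comul_one, sliceR_tmul]
      exact Submodule.smul_mem _ _ (Submodule.smul_mem _ _ (Submodule.mem_span_singleton_self _))
  have hne : Submodule.span k {(1 : H.carrier)} ≠ ⊥ := by
    rw [Ne, Submodule.span_singleton_eq_bot]; exact H.one_ne_zero'
  have h1 : ∀ E : Submodule k H.carrier, IsSubcoalgebraOf H.comul E → E ≠ ⊥ →
      Submodule.span k {(1 : H.carrier)} ≤ E := fun E hE hE0 => by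
    obtain ⟨hL, hR⟩ := (isSubcoalgebraOf_iff _ _).1 hE
    rw [Submodule.span_singleton_le_iff_mem]
    exact h E hE0 hL hR
  refine le_antisymm (sSup_le ?_) (le_sSup ⟨hsub, hne, fun E hE hEs => ?_⟩)
  · rintro D ⟨hD, hD0, hs⟩
    rcases hs _ (h1 D hD hD0) hsub with h2 | h2
    · exact absurd h2 hne
    · exact h2.ge
  · by_cases hE0 : E = ⊥
    · exact Or.inl hE0
    · exact Or.inr (le_antisymm hE (h1 E hEs hE0))

/-! ### Unipotence passes to closed normal subgroups and quotients -/

section Hom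

variable {H} {K : HopfSuperalgebra k} (φ : HopfSuperalgebra.Hom H K)

theorem Hom.actL (f : Module.Dual k K.carrier) (a) :
    K.actL f (φ.toLinearMap a) = φ.toLinearMap (H.actL (f ∘ₗ φ.toLinearMap) a) := by
  rw [actL_apply, φ.map_comul', sliceL_map]; rfl

theorem Hom.actR (f : Module.Dual k K.carrier) (a) :
    K.actR f (φ.toLinearMap a) = φ.toLinearMap (H.actR (f ∘ₗ φ.toLinearMap) a) := by
  rw [actR_apply, φ.map_comul', sliceR_map]; rfl

theorem Hom.map_po (a) : φ.toLinearMap (H.po a) = K.po (φ.toLinearMap a) := by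
  have h1 := H.pe_add_po a
  have h2 := K.pe_add_po (φ.toLinearMap a)
  rw [← φ.map_pe'] at h2
  rw [← add_right_inj (φ.toLinearMap (H.pe a)), h2, ← map_add, h1]

theorem IsIrreducible.of_injective (hφ : Function.Injective φ.toLinearMap)
    (h : K.IsIrreducible) : H.IsIrreducible := by
  refine H.isIrreducible_of_one_mem fun E hE0 hL hR => ?_
  have h1 : (1 : K.carrier) ∈ E.map φ.toLinearMap := by
    refine h.one_mem_of_actR K _ (fun h0 => hE0 ?_) ?_
    · have h0 := LinearMap.le_ker_iff_map.2 h0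
      rwa [LinearMap.ker_eq_bot.2 hφ, le_bot_iff] at h0
    · rintro f _ ⟨a, ha, rfl⟩
      rw [Hom.actR]
      exact Submodule.mem_map_of_mem (hR _ a ha)
  obtain ⟨a, ha, ha1⟩ := h1
  rw [← φ.map_one'] at ha1
  rwa [← hφ ha1]

theorem IsIrreducible.of_surjective (hφ : Function.Surjective φ.toLinearMap)
    (h : H.IsIrreducible) : K.IsIrreducible := by
  refine K.isIrreducible_of_one_mem fun E hE0 hL _ => ?_
  refine K.one_mem_of_killedBy (fun c => ?_) E hE0 hL
  obtain ⟨a, rfl⟩ := hφ c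
  obtain ⟨n, hn⟩ := h.killedBy H a
  refine ⟨n, ?_⟩
  induction n generalizing a with
  | zero => simp only [KilledBy] at *; rw [hn, map_zero]
  | succ n ih =>
    rintro _ ⟨f, hf, rfl⟩
    rw [Hom.actL]
    exact ih _ (hn _ ⟨_, by rwa [LinearMap.comp_apply, φ.map_one'], rfl⟩)

end Hom

end HopfSuperalgebra

/-! ### Parity and the twisted multiplication -/

namespace HopfSuperalgebra

variable {k : Type} [Field k] (H : HopfSuperalgebra k)

theorem po_po (a) : H.po (H.po a) = H.po a := by
  have := H.pe_add_po (H.po a)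
  rwa [H.pe_po, zero_add] at this

theorem pe_pe (a) : H.pe (H.pe a) = H.pe a := by
  have := H.pe_add_po (H.pe a)
  rwa [H.po_pe, add_zero] at this

theorem pe_eq_self {a} (h : H.po a = 0) : H.pe a = a := by
  simpa [h] using H.pe_add_po a

theorem po_eq_self {a} (h : H.pe a = 0) : H.po a = a := by
  simpa [h] using H.pe_add_po a

/-- The parity automorphism. -/
def parity : Module.End k H.carrier := H.pe - H.po

theorem parity_apply (a) : H.parity a = H.pe a - H.po a := rfl

theorem parity_of_even {a} (h : H.po a = 0) : H.parity a = a := by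
  rw [parity_apply, H.pe_eq_self h, h, sub_zero]

theorem parity_of_odd {a} (h : H.pe a = 0) : H.parity a = -a := by
  rw [parity_apply, H.po_eq_self h, h, zero_sub]

theorem parity_mul (a b) : H.parity (a * b) = H.parity a * H.parity b := by
  have h1 : ∀ c, H.parity c = c - H.po c - H.po c := fun c => by
    nth_rewrite 2 [← H.pe_add_po c]; rw [parity_apply]; abel
  have hee := H.parity_of_even (H.mul_even_even _ _ (H.po_pe a) (H.po_pe b))
  have heo := H.parity_of_odd (H.mul_even_odd _ _ (H.po_pe a) (H.pe_po b))
  have hoe := H.parity_of_odd (H.mul_odd_even _ _ (H.pe_po a) (H.po_pe b))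
  have hoo := H.parity_of_even (H.mul_odd_odd _ _ (H.pe_po a) (H.pe_po b))
  have hab : a * b = H.pe a * H.pe b + H.pe a * H.po b + H.po a * H.pe b + H.po a * H.po b := by
    nth_rewrite 1 [← H.pe_add_po a, ← H.pe_add_po b]; noncomm_ring
  rw [hab, map_add, map_add, map_add, hee, heo, hoe, hoo, parity_apply, parity_apply]
  noncomm_ring

/-- Multiplication of `s` on the left by `Δ a` in the super algebra `H ⊗ H`. -/
def twistedMul (a : H.carrier) :
    H.carrier ⊗[k] H.carrier →ₗ[k] H.carrier ⊗[k] H.carrier :=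
  LinearMap.mulLeft k (TensorProduct.map LinearMap.id H.pe (H.comul a)) +
    LinearMap.mulLeft k (TensorProduct.map LinearMap.id H.po (H.comul a)) ∘ₗ
      TensorProduct.map H.parity LinearMap.id

theorem twistedMul_apply (a s) : H.twistedMul a s =
    TensorProduct.map LinearMap.id H.pe (H.comul a) * s +
      TensorProduct.map LinearMap.id H.po (H.comul a) *
        TensorProduct.map H.parity LinearMap.id s := rfl

theorem comul_mul' (a b) : H.comul (a * b) = H.twistedMul a (H.comul b) := by
  have h1 : TensorProduct.map LinearMap.id H.pe (H.comul a) +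
      TensorProduct.map LinearMap.id H.po (H.comul a) = H.comul a := by
    generalize H.comul a = t
    induction t with
    | zero => simp
    | tmul x y => simp [← TensorProduct.tmul_add, H.pe_add_po]
    | add x y hx hy => rw [map_add, map_add, add_add_add_comm, hx, hy]
  have h2 : TensorProduct.map H.parity LinearMap.id (H.comul b) =
      H.comul b - (2 : k) • TensorProduct.map H.po LinearMap.id (H.comul b) := by
    generalize H.comul b = t
    induction t with
    | zero => simp
    | tmul x y =>
      simp only [TensorProduct.map_tmul, LinearMap.id_apply, TensorProduct.smul_tmul',
        ← TensorProduct.sub_tmul]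
      congr 1
      nth_rewrite 2 [← H.pe_add_po x]
      rw [parity_apply, two_smul]; abel
    | add x y hx hy => rw [map_add, map_add, hx, hy, smul_add]; abel
  rw [H.comul_mul, twistedMul_apply, h2, mul_sub, mul_smul_comm, ← add_sub_assoc, ← add_mul, h1]

theorem twistedMul_mul (a s) (y : H.carrier) :
    H.twistedMul a (s * (1 ⊗ₜ[k] y)) = H.twistedMul a s * (1 ⊗ₜ[k] y) := by
  have : TensorProduct.map H.parity LinearMap.id (s * (1 ⊗ₜ[k] y)) =
      TensorProduct.map H.parity LinearMap.id s * (1 ⊗ₜ[k] y) := by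
    induction s with
    | zero => simp
    | tmul u v => simp
    | add u v hu hv => rw [add_mul, map_add, map_add, add_mul, hu, hv]
  rw [twistedMul_apply, twistedMul_apply, this, add_mul, mul_assoc, mul_assoc]

/-! ### The canonical map `a ⊗ y ↦ Δ(a)(1 ⊗ y)` -/

/-- `u ⊗ v ↦ Δ(u)(1 ⊗ S v)`. -/
def comulAntipode : H.carrier ⊗[k] H.carrier →ₗ[k] H.carrier ⊗[k] H.carrier :=
  TensorProduct.lift (LinearMap.compl₂ (LinearMap.mul k (H.carrier ⊗[k] H.carrier))
    ((TensorProduct.mk k H.carrier H.carrier 1) ∘ₗ H.antipode) ∘ₗ H.comul)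

@[simp] theorem comulAntipode_tmul (u v : H.carrier) :
    H.comulAntipode (u ⊗ₜ v) = H.comul u * (1 ⊗ₜ[k] H.antipode v) := by
  simp [comulAntipode]

theorem map_id_algebraMap_counit (t : H.carrier ⊗[k] H.carrier) :
    TensorProduct.map LinearMap.id (Algebra.linearMap k H.carrier ∘ₗ H.counit) t =
      (TensorProduct.rid k H.carrier (TensorProduct.map LinearMap.id H.counit t)) ⊗ₜ[k] 1 := by
  induction t with
  | zero => simp
  | tmul x y =>
    simp [Algebra.algebraMap_eq_smul_one, TensorProduct.smul_tmul]
  | add x y hx hy => rw [map_add, map_add, map_add, hx, hy, TensorProduct.add_tmul]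

/-- `∑ Δ(a₁)(1 ⊗ S a₂) = a ⊗ 1`. -/
theorem comulAntipode_comul (a) : H.comulAntipode (H.comul a) = a ⊗ₜ[k] 1 := by
  have h1 : ∀ t : H.carrier ⊗[k] H.carrier, H.comulAntipode t =
      TensorProduct.map LinearMap.id
        (LinearMap.mul' k H.carrier ∘ₗ TensorProduct.map LinearMap.id H.antipode)
        (TensorProduct.assoc k H.carrier H.carrier H.carrier
          (TensorProduct.map H.comul LinearMap.id t)) := by
    intro t
    induction t with
    | zero => simp
    | add x y hx hy => simp only [map_add, hx, hy]
    | tmul u v =>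
      rw [comulAntipode_tmul, TensorProduct.map_tmul]
      generalize H.comul u = s
      induction s with
      | zero => simp
      | add x y hx hy => simp only [map_add, add_mul, hx, hy, TensorProduct.add_tmul]
      | tmul x y => simp
  have h2 : (LinearMap.mul' k H.carrier ∘ₗ TensorProduct.map LinearMap.id H.antipode) ∘ₗ H.comul =
      Algebra.linearMap k H.carrier ∘ₗ H.counit := LinearMap.ext H.comul_antipode
  rw [h1, H.coassoc, ← LinearMap.comp_apply, ← TensorProduct.map_comp, h2, LinearMap.id_comp,
    map_id_algebraMap_counit, H.comul_counit]

/-- The map `β : a ⊗ y ↦ Δ(a)(1 ⊗ y)`. -/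
def canMap : H.carrier ⊗[k] H.carrier →ₗ[k] H.carrier ⊗[k] H.carrier :=
  TensorProduct.lift (LinearMap.compl₂ (LinearMap.mul k (H.carrier ⊗[k] H.carrier))
    (TensorProduct.mk k H.carrier H.carrier 1) ∘ₗ H.comul)

@[simp] theorem canMap_tmul (a y : H.carrier) :
    H.canMap (a ⊗ₜ y) = H.comul a * (1 ⊗ₜ[k] y) := by
  simp [canMap]

/-- `β` is injective, with left inverse `a ⊗ y ↦ ∑ a₁ ⊗ S(a₂) y`. -/
theorem canMap_injective : Function.Injective H.canMap := by
  let γ : H.carrier ⊗[k] H.carrier →ₗ[k] H.carrier ⊗[k] H.carrier :=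
    TensorProduct.lift (LinearMap.compl₂ (LinearMap.mul k (H.carrier ⊗[k] H.carrier))
      (TensorProduct.mk k H.carrier H.carrier 1) ∘ₗ
        TensorProduct.map LinearMap.id H.antipode ∘ₗ H.comul)
  have hγ : ∀ a y, γ (a ⊗ₜ y) =
      TensorProduct.map LinearMap.id H.antipode (H.comul a) * (1 ⊗ₜ[k] y) := fun a y => by
    simp [γ]
  have h1 : ∀ t : H.carrier ⊗[k] H.carrier, γ t =
      TensorProduct.map LinearMap.id
        (LinearMap.mul' k H.carrier ∘ₗ TensorProduct.map H.antipode LinearMap.id)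
        (TensorProduct.assoc k H.carrier H.carrier H.carrier
          (TensorProduct.map H.comul LinearMap.id t)) := by
    intro t
    induction t with
    | zero => simp
    | add x y hx hy => simp only [map_add, hx, hy]
    | tmul u v =>
      rw [hγ, TensorProduct.map_tmul]
      generalize H.comul u = s
      induction s with
      | zero => simp
      | add x y hx hy => simp only [map_add, add_mul, hx, hy, TensorProduct.add_tmul]
      | tmul x y => simp
  have h2 : (LinearMap.mul' k H.carrier ∘ₗ TensorProduct.map H.antipode LinearMap.id) ∘ₗ H.comul =
      Algebra.linearMap k H.carrier ∘ₗ H.counit := LinearMap.ext H.antipode_comul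
  have h3 : ∀ a, γ (H.comul a) = a ⊗ₜ[k] 1 := fun a => by
    rw [h1, H.coassoc, ← LinearMap.comp_apply, ← TensorProduct.map_comp, h2, LinearMap.id_comp,
      map_id_algebraMap_counit, H.comul_counit]
  have h4 : ∀ (t : H.carrier ⊗[k] H.carrier) (y : H.carrier),
      γ (t * (1 ⊗ₜ[k] y)) = γ t * (1 ⊗ₜ[k] y) := by
    intro t y
    induction t with
    | zero => simp
    | add x y hx hy => simp only [map_add, add_mul, hx, hy]
    | tmul u v => simp [hγ, mul_assoc]
  refine Function.LeftInverse.injective (g := γ) fun t => ?_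
  induction t with
  | zero => simp
  | add x y hx hy => simp only [map_add, hx, hy]
  | tmul a y => rw [canMap_tmul, h4, h3]; simp

/-! ### The relations of the balanced tensor product over the image of `p` -/

section Balanced

variable {H} {F : HopfSuperalgebra k} (p : HopfSuperalgebra.Hom F H)

/-- The kernel of `H ⊗ H → H ⊗_F H`, for `H` an algebra over `F` along `p`. Relations over
homogeneous `b` suffice; they keep the scalars central or anticommuting with odd elements. -/
def balanced : Submodule k (H.carrier ⊗[k] H.carrier) :=
  Submodule.span k {t | ∃ a b y, (F.po b = 0 ∨ F.pe b = 0) ∧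
    t = (a * p.toLinearMap b) ⊗ₜ[k] y - a ⊗ₜ[k] (p.toLinearMap b * y)}

theorem mem_balanced (a b y) : (a * p.toLinearMap b) ⊗ₜ[k] y - a ⊗ₜ[k] (p.toLinearMap b * y) ∈
    balanced p := by
  have h1 := Submodule.subset_span (R := k) (show _ ∈ {t | ∃ a b y, (F.po b = 0 ∨ F.pe b = 0) ∧
    t = (a * p.toLinearMap b) ⊗ₜ[k] y - a ⊗ₜ[k] (p.toLinearMap b * y)} from
      ⟨a, F.pe b, y, Or.inl (F.po_pe b), rfl⟩)
  have h2 := Submodule.subset_span (R := k) (show _ ∈ {t | ∃ a b y, (F.po b = 0 ∨ F.pe b = 0) ∧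
    t = (a * p.toLinearMap b) ⊗ₜ[k] y - a ⊗ₜ[k] (p.toLinearMap b * y)} from
      ⟨a, F.po b, y, Or.inr (F.pe_po b), rfl⟩)
  have := add_mem h1 h2
  rwa [sub_add_sub_comm, ← TensorProduct.add_tmul, ← TensorProduct.tmul_add, ← mul_add, ← add_mul,
    ← map_add, F.pe_add_po] at this

/-- `∑ a p(b)₁ ⊗ S(p(b)₂) y` is balanced if `ε(b) = 0`, and `β` maps it to the product
`Δ(a)(p(b) ⊗ y)` of the super algebra `H ⊗ H`. -/
theorem exists_balanced (a b y) (hb : F.counit b = 0) : ∃ n ∈ balanced p,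
    H.canMap n = H.twistedMul a (p.toLinearMap b ⊗ₜ[k] y) := by
  let n : H.carrier ⊗[k] H.carrier →ₗ[k] H.carrier ⊗[k] H.carrier :=
    TensorProduct.map (LinearMap.mulLeft k a) (LinearMap.mulRight k y ∘ₗ H.antipode)
  refine ⟨n (H.comul (p.toLinearMap b)), ?_, ?_⟩
  · have h1 : ∀ t : F.carrier ⊗[k] F.carrier,
        n (TensorProduct.map p.toLinearMap p.toLinearMap t) -
          a ⊗ₜ[k] (LinearMap.mul' k H.carrier (TensorProduct.map LinearMap.id H.antipode
            (TensorProduct.map p.toLinearMap p.toLinearMap t)) * y) ∈ balanced p := by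
      intro t
      induction t with
      | zero => simp
      | add u v hu hv =>
        have := add_mem hu hv
        rw [sub_add_sub_comm, ← TensorProduct.tmul_add, ← add_mul] at this
        simpa only [map_add] using this
      | tmul u v =>
        have := mem_balanced p a u (H.antipode (p.toLinearMap v) * y)
        simpa [n, mul_assoc] using this
    have h2 := h1 (F.comul b)
    rw [← p.map_comul', H.comul_antipode, p.map_counit', hb] at h2
    simpa using h2
  · have h1 : ∀ t : H.carrier ⊗[k] H.carrier,
        H.canMap (n t) = H.twistedMul a (H.comulAntipode t * (1 ⊗ₜ[k] y)) := by
      intro t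
      induction t with
      | zero => simp
      | add u v hu hv => simp only [map_add, add_mul, hu, hv]
      | tmul u v =>
        rw [comulAntipode_tmul, twistedMul_mul, twistedMul_mul, ← comul_mul', mul_assoc]
        simp [n]
    rw [h1, comulAntipode_comul]; simp

/-- `a p(b) ⊗ y ∈ β(balanced)` if `ε(b) = 0` and `τ` (the identity or the parity
automorphism) is the effect on a right tensor factor of moving it past `p(b)`: by the identity
`∑ a₁ ⊗ τ(a₂ S(a₃)) = a ⊗ 1` it is a sum of tensors `Δ(a₁)(p(b) ⊗ τ(S(a₂)) y)`. -/
theorem mem_map_balanced_aux (τ : Module.End k H.carrier)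
    (hτ1 : ∀ a b, τ (a * b) = τ a * τ b) (hτ : τ 1 = 1) (a b y) (hb : F.counit b = 0)
    (h : ∀ a y, H.twistedMul a (p.toLinearMap b ⊗ₜ[k] y) =
      TensorProduct.map LinearMap.id τ (H.comul a) * (p.toLinearMap b ⊗ₜ[k] y)) :
    (a * p.toLinearMap b) ⊗ₜ[k] y ∈ (balanced p).map H.canMap := by
  have h1 : ∀ t : H.carrier ⊗[k] H.carrier,
      TensorProduct.map LinearMap.id τ (H.comulAntipode t) * (p.toLinearMap b ⊗ₜ[k] y) ∈
        (balanced p).map H.canMap := by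
    intro t
    induction t with
    | zero => simp
    | add u v hu hv =>
      rw [map_add, map_add, add_mul]
      exact add_mem hu hv
    | tmul u v =>
      have h2 : ∀ s : H.carrier ⊗[k] H.carrier, ∀ z : H.carrier,
          TensorProduct.map LinearMap.id τ (s * (1 ⊗ₜ[k] z)) =
            TensorProduct.map LinearMap.id τ s * (1 ⊗ₜ[k] τ z) := by
        intro s z
        induction s with
        | zero => simp
        | add x y hx hy => simp only [map_add, add_mul, hx, hy]
        | tmul x y => simp [hτ1]
      obtain ⟨n, hn, hn'⟩ := exists_balanced p u b (τ (H.antipode v) * y) hb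
      refine ⟨n, hn, ?_⟩
      rw [hn', h, comulAntipode_tmul, h2, mul_assoc]
      simp
  have h2 := h1 (H.comul a)
  rwa [comulAntipode_comul, TensorProduct.map_tmul, hτ, LinearMap.id_apply,
    Algebra.TensorProduct.tmul_mul_tmul, one_mul] at h2

theorem mem_map_balanced (a b y) (hb : F.counit b = 0) :
    (a * p.toLinearMap b) ⊗ₜ[k] y ∈ (balanced p).map H.canMap := by
  have ho : F.counit (F.po b) = 0 := F.counit_odd _ (F.pe_po b)
  have he : F.counit (F.pe b) = 0 := by
    rw [← F.pe_add_po b, map_add, ho, add_zero] at hb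
    exact hb
  have h1 := mem_map_balanced_aux p LinearMap.id (fun _ _ => rfl) rfl a (F.pe b) y he fun a' y' => by
    have : H.parity (p.toLinearMap (F.pe b)) = p.toLinearMap (F.pe b) := by
      apply H.parity_of_even; rw [← p.map_po, F.po_pe, map_zero]
    rw [twistedMul_apply, TensorProduct.map_tmul, this, LinearMap.id_apply, ← add_mul]
    congr 1
    generalize H.comul a' = t
    induction t with
    | zero => simp
    | tmul x y => simp [← TensorProduct.tmul_add, H.pe_add_po]
    | add x y hx hy => rw [map_add, map_add, add_add_add_comm, hx, hy, map_add]
  have h2 := mem_map_balanced_aux p H.parity H.parity_mul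
      (H.parity_of_even H.one_even) a (F.po b) y ho fun a' y' => by
    have : H.parity (p.toLinearMap (F.po b)) = -p.toLinearMap (F.po b) := by
      apply H.parity_of_odd; rw [← p.map_pe', F.pe_po, map_zero]
    rw [twistedMul_apply, TensorProduct.map_tmul, this, LinearMap.id_apply, TensorProduct.neg_tmul,
      mul_neg, ← sub_eq_add_neg, ← sub_mul]
    congr 1
    generalize H.comul a' = t
    induction t with
    | zero => simp
    | tmul x y => simp [← TensorProduct.tmul_sub, H.parity_apply]
    | add x y hx hy => rw [map_add, map_add, add_sub_add_comm, hx, hy, map_add]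
  have := add_mem h1 h2
  rwa [← TensorProduct.add_tmul, ← mul_add, ← map_add, F.pe_add_po] at this

variable {K : HopfSuperalgebra k} (q : HopfSuperalgebra.Hom H K)

/-- Exactness at `H`: a left `K`-coinvariant `w` satisfies `w ⊗ 1 = 1 ⊗ w` in `H ⊗_F H`. -/
theorem sub_mem_balanced (hker : LinearMap.ker q.toLinearMap = Submodule.span k
      {x : H.carrier | ∃ a b, x = a * p.toLinearMap b ∧ F.counit b = 0}) {w : H.carrier}
    (hw : TensorProduct.map q.toLinearMap LinearMap.id (H.comul w) = 1 ⊗ₜ[k] w) :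
    w ⊗ₜ[k] 1 - 1 ⊗ₜ[k] w ∈ balanced p := by
  have h1 : H.canMap (w ⊗ₜ[k] 1 - 1 ⊗ₜ[k] w) = H.comul w - 1 ⊗ₜ[k] w := by
    rw [map_sub, canMap_tmul, canMap_tmul, H.comul_one]
    simp [← Algebra.TensorProduct.one_def]
  have h2 : ∀ g, sliceR g (H.comul w - 1 ⊗ₜ[k] w) ∈ LinearMap.ker q.toLinearMap := fun g => by
    have h3 : TensorProduct.map q.toLinearMap LinearMap.id (H.comul w - 1 ⊗ₜ[k] w) = 0 := by
      rw [map_sub, hw, TensorProduct.map_tmul, q.map_one', LinearMap.id_apply, sub_self]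
    have h4 := sliceR_map g q.toLinearMap LinearMap.id (H.comul w - 1 ⊗ₜ[k] w)
    rw [h3, map_zero] at h4
    exact h4.symm
  obtain ⟨s, hs⟩ := mem_range_of_sliceR _ h2
  have h3 : H.comul w - 1 ⊗ₜ[k] w ∈ (balanced p).map H.canMap := by
    rw [← hs]
    clear hs
    induction s with
    | zero => simp
    | add x y hx hy => rw [map_add]; exact add_mem hx hy
    | tmul z y =>
      obtain ⟨z, hz⟩ := z
      rw [TensorProduct.map_tmul, Submodule.subtype_apply, LinearMap.id_apply]
      change z ⊗ₜ[k] y ∈ _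
      have hz' := hz
      rw [hker] at hz'
      clear hz
      induction hz' using Submodule.span_induction with
      | mem z hz =>
        obtain ⟨a, b, rfl, hb⟩ := hz
        exact mem_map_balanced p a b y hb
      | zero => rw [TensorProduct.zero_tmul]; exact zero_mem _
      | add x y _ _ hx hy => rw [TensorProduct.add_tmul]; exact add_mem hx hy
      | smul c x _ hx => rw [← TensorProduct.smul_tmul']; exact Submodule.smul_mem _ _ hx
  rw [← h1] at h3
  obtain ⟨n, hn, hn'⟩ := h3
  rwa [← H.canMap_injective hn']

end Balanced

end HopfSuperalgebra

/-! ### Functionals over the residue field of an associated prime -/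

/-- Let `N` be killed by the prime `P`. If no multiple of `m` by an element outside `P` lies in the
submodule `N'`, a linear functional to the residue field at `P` separates `m` from `N'`. -/
theorem exists_functional {R N : Type*} [CommRing R] [AddCommGroup N] [Module R N] (P : Ideal R)
    [P.IsPrime] (hP : ∀ r ∈ P, ∀ x : N, r • x = 0) (N' : Submodule R N) (m : N)
    (hm : ∀ s ∉ P, s • m ∉ N') :
    ∃ ψ : N →ₗ[R] FractionRing (R ⧸ P), (∀ x ∈ N', ψ x = 0) ∧ ψ m ≠ 0 := by
  have htors : Module.IsTorsionBySet R (N ⧸ N') P := by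
    intro x r
    obtain ⟨x, rfl⟩ := Submodule.Quotient.mk_surjective _ x
    rw [← Submodule.Quotient.mk_smul, hP r r.2 x, Submodule.Quotient.mk_zero]
  letI : Module (R ⧸ P) (N ⧸ N') := htors.module
  have hsmul : ∀ (r : R) (x : N ⧸ N'), (Ideal.Quotient.mk P r) • x = r • x := fun r x => rfl
  let M := LocalizedModule (nonZeroDivisors (R ⧸ P)) (N ⧸ N')
  let ι : (N ⧸ N') →ₗ[R ⧸ P] M := LocalizedModule.mkLinearMap _ _
  have hm0 : ι (Submodule.Quotient.mk m) ≠ 0 := by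
    intro h0
    obtain ⟨⟨s, hs⟩, hs0⟩ := (IsLocalizedModule.eq_zero_iff (nonZeroDivisors (R ⧸ P)) ι).1 h0
    obtain ⟨s, rfl⟩ := Ideal.Quotient.mk_surjective s
    change (Ideal.Quotient.mk P s) • (Submodule.Quotient.mk m : N ⧸ N') = 0 at hs0
    rw [hsmul, ← Submodule.Quotient.mk_smul, Submodule.Quotient.mk_eq_zero] at hs0
    refine hm s (fun hsP => ?_) hs0
    exact nonZeroDivisors.ne_zero hs (Ideal.Quotient.eq_zero_iff_mem.2 hsP)
  obtain ⟨φ, hφ⟩ : ∃ φ : Module.Dual (FractionRing (R ⧸ P)) M, φ (ι (Submodule.Quotient.mk m)) ≠ 0 := by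
    by_contra! h
    exact hm0 ((Module.forall_dual_apply_eq_zero_iff (FractionRing (R ⧸ P)) _).1 h)
  let ψ : N →ₗ[R] FractionRing (R ⧸ P) :=
    { toFun := fun x => φ (ι (Submodule.Quotient.mk x))
      map_add' := fun x y => by rw [Submodule.Quotient.mk_add, map_add, map_add]
      map_smul' := fun r x => by
        rw [Submodule.Quotient.mk_smul, ← hsmul, map_smul,
          ← algebraMap_smul (FractionRing (R ⧸ P)) (Ideal.Quotient.mk P r), map_smul,
          RingHom.id_apply, Algebra.smul_def r, smul_eq_mul]
        rfl }
  refine ⟨ψ, fun x hx => ?_, hφ⟩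
  change φ (ι (Submodule.Quotient.mk x)) = 0
  rw [(Submodule.Quotient.mk_eq_zero N').2 hx, map_zero, map_zero]

/-- If `w ⊗ 1 = 1 ⊗ w` in the tensor product balanced over the central scalars `R` and the
elements of `V`, and `e` is killed by `V` and has prime annihilator `P` in `R`, then `e w` is
proportional to `e` over the residue field at `P`: otherwise the tensors `e ⊗ e w` and
`e w ⊗ e` are separated by a product of two functionals. -/
theorem exists_smul_mem_span {k R A : Type*} [Field k] [CommRing R] [Algebra k R] [Ring A]
    [Algebra k A] [Algebra R A] [IsScalarTower k R A] (V : Set A)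
    (hV : ∀ v ∈ V, ∀ a, ∃ a', a * v = v * a') (e : A) (heV : ∀ v ∈ V, e * v = 0)
    (P : Ideal R) [P.IsPrime] (hP : ∀ r, r ∈ P ↔ r • e = 0) (w : A)
    (hw : w ⊗ₜ[k] (1 : A) - 1 ⊗ₜ[k] w ∈ Submodule.span k {t : A ⊗[k] A | ∃ a c y,
      ((∃ r : R, c = algebraMap R A r) ∨ c ∈ V) ∧ t = (a * c) ⊗ₜ[k] y - a ⊗ₜ[k] (c * y)}) :
    ∃ s ∉ P, s • (e * w) ∈ Submodule.span R {e} := by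
  by_contra! hcon
  let μ : A →ₗ[R] A := LinearMap.mulLeft R e
  have hN : ∀ r ∈ P, ∀ x : LinearMap.range μ, r • x = 0 := by
    rintro r hr ⟨_, a, rfl⟩
    apply Subtype.ext
    change r • (e * a) = 0
    rw [← smul_mul_assoc, (hP r).1 hr, zero_mul]
  have he1 : (μ.rangeRestrict 1 : A) = e := mul_one e
  obtain ⟨ψ, hψ, hψw⟩ := exists_functional P hN (Submodule.span R {μ.rangeRestrict 1})
    (μ.rangeRestrict w) (fun s hs hmem => hcon s hs (by
      obtain ⟨r, hr⟩ := Submodule.mem_span_singleton.1 hmem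
      refine Submodule.mem_span_singleton.2 ⟨r, ?_⟩
      have := congrArg Subtype.val hr
      rwa [Submodule.coe_smul, Submodule.coe_smul, he1] at this))
  obtain ⟨ψ', -, hψe⟩ := exists_functional P hN ⊥ (μ.rangeRestrict 1) (fun s hs hmem => by
    rw [Submodule.mem_bot] at hmem
    have := congrArg Subtype.val hmem
    rw [Submodule.coe_smul, he1] at this
    exact hs ((hP s).2 this))
  let Φ : A ⊗[k] A →ₗ[k] FractionRing (R ⧸ P) := LinearMap.mul' k _ ∘ₗ
    TensorProduct.map ((ψ ∘ₗ μ.rangeRestrict).restrictScalars k)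
      ((ψ' ∘ₗ μ.rangeRestrict).restrictScalars k)
  have hΦ : ∀ a y, Φ (a ⊗ₜ y) = ψ (μ.rangeRestrict a) * ψ' (μ.rangeRestrict y) := fun a y => by
    simp [Φ]
  have hz : ∀ a, e * a = 0 → μ.rangeRestrict a = 0 := fun a ha => Subtype.ext ha
  have h1 : Φ (w ⊗ₜ[k] (1 : A) - 1 ⊗ₜ[k] w) = 0 := by
    generalize w ⊗ₜ[k] (1 : A) - 1 ⊗ₜ[k] w = t at hw
    induction hw using Submodule.span_induction with
    | zero => exact map_zero _
    | add x y _ _ hx hy => rw [map_add, hx, hy, add_zero]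
    | smul c x _ hx => rw [map_smul, hx, smul_zero]
    | mem x hx =>
      obtain ⟨a, c, y, hc, rfl⟩ := hx
      rw [map_sub, hΦ, hΦ]
      rcases hc with ⟨r, rfl⟩ | hc
      · rw [← Algebra.commutes, ← Algebra.smul_def, ← Algebra.smul_def, map_smul, map_smul,
          map_smul, map_smul, smul_mul_assoc, mul_smul_comm, sub_self]
      · obtain ⟨a', ha'⟩ := hV c hc a
        rw [hz (a * c) (by rw [ha', ← mul_assoc, heV c hc, zero_mul]),
          hz (c * y) (by rw [← mul_assoc, heV c hc, zero_mul])]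
        simp
  rw [map_sub, hΦ, hΦ, hψ _ (Submodule.mem_span_singleton_self _), zero_mul, sub_zero] at h1
  exact mul_ne_zero hψw hψe h1

/-- Anticommuting elements of square zero have a common nonzero annihilator. -/
theorem exists_annihilated {k A : Type*} [Field k] [Ring A] [Nontrivial A] [Algebra k A]
    (C : Subalgebra k A) (V : Finset A) (hVC : ∀ v ∈ V, v ∈ C) (hV0 : ∀ v ∈ V, v * v = 0)
    (hV : ∀ v ∈ V, ∀ v' ∈ V, v * v' = -(v' * v)) :
    ∃ ω ∈ C, ω ≠ 0 ∧ ∀ v ∈ V, ω * v = 0 := by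
  classical
  induction V using Finset.induction_on with
  | empty => exact ⟨1, C.one_mem, one_ne_zero, by simp⟩
  | insert v V hv ih =>
    obtain ⟨ω, hω, hω0, hωV⟩ := ih (fun x hx => hVC x (Finset.mem_insert_of_mem hx))
      (fun x hx => hV0 x (Finset.mem_insert_of_mem hx))
      (fun x hx y hy => hV x (Finset.mem_insert_of_mem hx) y (Finset.mem_insert_of_mem hy))
    by_cases h0 : ω * v = 0
    · refine ⟨ω, hω, hω0, fun x hx => ?_⟩
      rcases Finset.mem_insert.1 hx with rfl | hx
      exacts [h0, hωV x hx]
    · refine ⟨ω * v, C.mul_mem hω (hVC v (Finset.mem_insert_self _ _)), h0, fun x hx => ?_⟩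
      rcases Finset.mem_insert.1 hx with rfl | hxV
      · rw [mul_assoc, hV0 x hx, mul_zero]
      · rw [mul_assoc, hV v (Finset.mem_insert_self _ _) x hx, mul_neg, ← mul_assoc, hωV x hxV,
          zero_mul, neg_zero]

/-- Ring-theoretic core of `exists_multiplier`: multiply a common annihilator of the odd generators
`V` by a scalar so that its annihilator in `R` is an associated prime `P`; each `w` is then cleared
by a scalar outside `P`, and the product of these scalars works for all `w` at once. -/
theorem exists_multiplier_aux {k R A : Type*} [Field k] [CommRing R] [IsNoetherianRing R]
    [Algebra k R] [Ring A] [Nontrivial A] [Algebra k A] [Algebra R A] [IsScalarTower k R A]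
    (C : Subalgebra k A) (hRC : ∀ r : R, algebraMap R A r ∈ C)
    (V : Finset A) (hVC : ∀ v ∈ V, v ∈ C) (hV0 : ∀ v ∈ V, v * v = 0)
    (hV : ∀ v ∈ V, ∀ v' ∈ V, v * v' = -(v' * v))
    (hVA : ∀ v ∈ V, ∀ a, ∃ a', a * v = v * a') (s : Finset A)
    (hs : ∀ w ∈ s, w ⊗ₜ[k] (1 : A) - 1 ⊗ₜ[k] w ∈ Submodule.span k {t : A ⊗[k] A | ∃ a c y,
      ((∃ r : R, c = algebraMap R A r) ∨ c ∈ V) ∧ t = (a * c) ⊗ₜ[k] y - a ⊗ₜ[k] (c * y)}) :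
    ∃ x ∈ C, x ≠ 0 ∧ ∀ w ∈ s, x * w ∈ C := by
  classical
  obtain ⟨ω, hω, hω0, hωV⟩ := exists_annihilated C V hVC hV0 hV
  have hsC : ∀ (r : R), ∀ c ∈ C, r • c ∈ C := fun r c hc => by
    rw [Algebra.smul_def]; exact C.mul_mem (hRC r) hc
  obtain ⟨P, hP, -⟩ := exists_le_isAssociatedPrime_of_isNoetherianRing R
    (M := Submodule.span R {ω}) ⟨ω, Submodule.mem_span_singleton_self ω⟩
    (fun h => hω0 (congrArg Subtype.val h))
  obtain ⟨hPp, ⟨e, he⟩, hPe⟩ := isAssociatedPrime_iff.1 hP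
  obtain ⟨r, rfl⟩ := Submodule.mem_span_singleton.1 he
  have hPe' : ∀ t : R, t ∈ P ↔ t • (r • ω) = 0 := fun t => by
    rw [hPe, Submodule.mem_colon_singleton, Submodule.mem_bot, Subtype.ext_iff]
    rfl
  have heV : ∀ v ∈ V, (r • ω) * v = 0 := fun v hv => by rw [smul_mul_assoc, hωV v hv, smul_zero]
  have heC : r • ω ∈ C := hsC r ω hω
  generalize r • ω = e at *
  have h1 : ∀ w : s, ∃ t ∉ P, t • (e * (w : A)) ∈ Submodule.span R {e} := fun w =>
    exists_smul_mem_span (V : Set A) hVA e heV P hPe' w (hs w w.2)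
  choose t ht ht' using h1
  refine ⟨(∏ w, t w) • e, hsC _ _ heC, fun h0 => ?_, fun w hw => ?_⟩
  · rw [← hPe', hPp.prod_mem_iff] at h0
    obtain ⟨w, -, hw⟩ := h0
    exact ht w hw
  · rw [smul_mul_assoc, ← Finset.mul_prod_erase _ _ (Finset.mem_univ (⟨w, hw⟩ : s)), mul_comm,
      mul_smul]
    obtain ⟨y, hy⟩ := Submodule.mem_span_singleton.1 (ht' ⟨w, hw⟩)
    rw [← hy]
    exact hsC _ _ (hsC _ _ heC)

namespace HopfSuperalgebra

variable {k : Type} [Field k] {H F K : HopfSuperalgebra k}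

/-! ### Multiplying coinvariants into the image of `p` -/

/-- A balanced tensor is a combination of relations over finitely many homogeneous elements. -/
theorem exists_finset_of_mem_balanced (p : HopfSuperalgebra.Hom F H) {t : H.carrier ⊗[k] H.carrier}
    (ht : t ∈ balanced p) : ∃ B : Finset F.carrier, (∀ b ∈ B, F.po b = 0 ∨ F.pe b = 0) ∧
      t ∈ Submodule.span k {t | ∃ a b y, b ∈ B ∧
        t = (a * p.toLinearMap b) ⊗ₜ[k] y - a ⊗ₜ[k] (p.toLinearMap b * y)} := by
  classical
  induction ht using Submodule.span_induction with
  | mem t ht =>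
    obtain ⟨a, b, y, hb, rfl⟩ := ht
    exact ⟨{b}, by simpa using hb,
      Submodule.subset_span ⟨a, b, y, Finset.mem_singleton_self b, rfl⟩⟩
  | zero => exact ⟨∅, by simp, zero_mem _⟩
  | add x y _ _ hx hy =>
    obtain ⟨B, hB, hx⟩ := hx
    obtain ⟨B', hB', hy⟩ := hy
    refine ⟨B ∪ B', fun b hb => (Finset.mem_union.1 hb).elim (hB b) (hB' b),
      add_mem (Submodule.span_mono ?_ hx) (Submodule.span_mono ?_ hy)⟩
    · rintro _ ⟨a, b, y, hb, rfl⟩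
      exact ⟨a, b, y, Finset.mem_union_left _ hb, rfl⟩
    · rintro _ ⟨a, b, y, hb, rfl⟩
      exact ⟨a, b, y, Finset.mem_union_right _ hb, rfl⟩
  | smul c x _ hx =>
    obtain ⟨B, hB, hx⟩ := hx
    exact ⟨B, hB, Submodule.smul_mem _ _ hx⟩

/-- A finite-dimensional space of elements `w` with `w ⊗ 1 = 1 ⊗ w` in `H ⊗_F H` is multiplied
into the image of `F` by some nonzero element of that image. -/
theorem exists_multiplier (h2 : (2 : k) ≠ 0) (h : H.IsSuperCommutative)
    (p : HopfSuperalgebra.Hom F H) (W : Submodule k H.carrier) (hW : W.FG)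
    (hbal : ∀ w ∈ W, w ⊗ₜ[k] 1 - 1 ⊗ₜ[k] w ∈ balanced p) :
    ∃ x, p.toLinearMap x ≠ 0 ∧
      ∀ w ∈ W, p.toLinearMap x * w ∈ LinearMap.range p.toLinearMap := by
  classical
  obtain ⟨s, rfl⟩ := hW
  haveI : Nontrivial H.carrier := ⟨⟨1, 0, H.one_ne_zero'⟩⟩
  have h1 : ∀ w : s, ∃ B : Finset F.carrier, (∀ b ∈ B, F.po b = 0 ∨ F.pe b = 0) ∧
      (w : H.carrier) ⊗ₜ[k] (1 : H.carrier) - 1 ⊗ₜ[k] (w : H.carrier) ∈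
      Submodule.span k {t | ∃ a b y, b ∈ B ∧
        t = (a * p.toLinearMap b) ⊗ₜ[k] y - a ⊗ₜ[k] (p.toLinearMap b * y)} := fun w =>
    exists_finset_of_mem_balanced p (hbal w (Submodule.subset_span w.2))
  choose B hB hBw using h1
  -- `R` is the algebra generated by the even scalars involved, `V` consists of the odd ones
  let B' : Finset F.carrier := Finset.univ.biUnion B
  have hcen : ∀ b, F.po b = 0 → ∀ a, p.toLinearMap b * a = a * p.toLinearMap b := fun b hb a =>
    h.1 _ _ (by rw [← p.map_po, hb, map_zero])
  let Z := Subalgebra.center k H.carrier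
  let U : Finset Z := (B'.filter fun b => F.po b = 0).attach.image
    fun b : {b // b ∈ B'.filter fun b => F.po b = 0} => ⟨p.toLinearMap b, Subalgebra.mem_center_iff.2 fun a =>
      (hcen b (Finset.mem_filter.1 b.2).2 a).symm⟩
  let R : Subalgebra k Z := Algebra.adjoin k (U : Set Z)
  haveI : IsNoetherianRing R := isNoetherianRing_of_fg (Subalgebra.fg_adjoin_finset U)
  letI : Algebra R H.carrier := RingHom.toAlgebra' ((Z.val.comp R.val : R →ₐ[k] H.carrier) : R →+* H.carrier)
    fun c x => (Subalgebra.mem_center_iff.1 c.1.2 x).symm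
  have hmap : ∀ r : R, algebraMap R H.carrier r = (r : Z) := fun r => rfl
  haveI : @IsScalarTower k R H.carrier _ Algebra.toSMul _ := IsScalarTower.of_algebraMap_eq fun c => rfl
  let V : Finset H.carrier := (B'.filter fun b => F.pe b = 0).image p.toLinearMap
  have hVodd : ∀ v ∈ V, H.pe v = 0 := fun v hv => by
    obtain ⟨b, hb, rfl⟩ := Finset.mem_image.1 hv
    rw [← p.map_pe', (Finset.mem_filter.1 hb).2, map_zero]
  let C : Subalgebra k H.carrier :=
    (AlgHom.ofLinearMap p.toLinearMap p.map_one' p.map_mul').range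
  have hRC : R ≤ C.comap Z.val := by
    refine Algebra.adjoin_le fun u hu => ?_
    obtain ⟨b, -, rfl⟩ := Finset.mem_image.1 (Finset.mem_coe.1 hu)
    exact ⟨b, rfl⟩
  obtain ⟨_, ⟨x, rfl⟩, hx0, hx⟩ := exists_multiplier_aux (k := k) (R := R) C (fun r => hRC r.2) V
    (fun v hv => by
      obtain ⟨b, -, rfl⟩ := Finset.mem_image.1 hv
      exact ⟨b, rfl⟩)
    (fun v hv => by
      have h3 := h.2 v v (hVodd v hv) (hVodd v hv)
      rw [eq_neg_iff_add_eq_zero, ← two_smul k] at h3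
      exact (smul_eq_zero.1 h3).resolve_left h2)
    (fun v hv v' hv' => h.2 v v' (hVodd v hv) (hVodd v' hv'))
    (fun v hv a => ⟨H.parity a, by
      nth_rewrite 1 [← H.pe_add_po a]
      rw [parity_apply, add_mul, mul_sub, h.1 (H.pe a) v (H.po_pe a),
        h.2 (H.po a) v (H.pe_po a) (hVodd v hv), sub_eq_add_neg]⟩) s
    (fun w hw => by
      refine Submodule.span_mono ?_ (hBw ⟨w, hw⟩)
      rintro _ ⟨a, b, y, hb, rfl⟩
      refine ⟨a, p.toLinearMap b, y, ?_, rfl⟩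
      have hb' : b ∈ B' := Finset.mem_biUnion.2 ⟨_, Finset.mem_univ _, hb⟩
      rcases hB _ b hb with hbe | hbo
      · left
        have hbU : b ∈ B'.filter fun b => F.po b = 0 := Finset.mem_filter.2 ⟨hb', hbe⟩
        exact ⟨⟨_, Algebra.subset_adjoin (Finset.mem_coe.2
          (Finset.mem_image_of_mem _ (Finset.mem_attach _ ⟨b, hbU⟩)))⟩, rfl⟩
      · right
        exact Finset.mem_image_of_mem _ (Finset.mem_filter.2 ⟨hb', hbo⟩))
  refine ⟨x, hx0, fun w hw => ?_⟩
  induction hw using Submodule.span_induction with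
  | mem w hw => exact hx w hw
  | zero => rw [mul_zero]; exact zero_mem _
  | add u v _ _ hu hv => rw [mul_add]; exact add_mem hu hv
  | smul c u _ hu => rw [mul_smul_comm]; exact Submodule.smul_mem _ _ hu

/-! ### Coinvariants -/

theorem parity_parity (H : HopfSuperalgebra k) (a) : H.parity (H.parity a) = a := by
  rw [parity_apply, parity_apply, map_sub, map_sub, H.pe_pe, H.pe_po, H.po_pe, H.po_po, sub_zero,
    zero_sub, sub_neg_eq_add, H.pe_add_po]

theorem comul_parity (H : HopfSuperalgebra k) (a) :
    H.comul (H.parity a) = TensorProduct.map H.parity H.parity (H.comul a) := by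
  have h3 : ∀ t, TensorProduct.map H.parity H.parity
      (TensorProduct.map H.pe H.pe t + TensorProduct.map H.po H.po t) =
      TensorProduct.map H.pe H.pe t + TensorProduct.map H.po H.po t := fun t => by
    induction t with
    | zero => simp
    | tmul x y =>
      simp only [TensorProduct.map_tmul, map_add, H.parity_of_even (H.po_pe _),
        H.parity_of_odd (H.pe_po _), TensorProduct.neg_tmul, TensorProduct.tmul_neg, neg_neg]
    | add x y hx hy =>
      rw [map_add (TensorProduct.map H.pe H.pe), map_add (TensorProduct.map H.po H.po),
        add_add_add_comm, map_add, hx, hy]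
  have h4 : ∀ t, TensorProduct.map H.parity H.parity
      (TensorProduct.map H.pe H.po t + TensorProduct.map H.po H.pe t) =
      -(TensorProduct.map H.pe H.po t + TensorProduct.map H.po H.pe t) := fun t => by
    induction t with
    | zero => simp
    | tmul x y =>
      simp only [TensorProduct.map_tmul, map_add, H.parity_of_even (H.po_pe _),
        H.parity_of_odd (H.pe_po _), TensorProduct.neg_tmul, TensorProduct.tmul_neg, neg_add]
    | add x y hx hy =>
      rw [map_add (TensorProduct.map H.pe H.po), map_add (TensorProduct.map H.po H.pe),
        add_add_add_comm, map_add, hx, hy, ← neg_add]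
  have h1 : TensorProduct.map H.parity H.parity (H.comul (H.pe a)) = H.comul (H.pe a) := by
    have h5 := h3 (H.comul (H.pe a))
    rwa [← H.comul_even _ (H.po_pe a)] at h5
  have h2 : TensorProduct.map H.parity H.parity (H.comul (H.po a)) = -H.comul (H.po a) := by
    have h5 := h4 (H.comul (H.po a))
    rwa [← H.comul_odd _ (H.pe_po a)] at h5
  nth_rewrite 2 [← H.pe_add_po a]
  rw [parity_apply, map_sub, map_add, map_add, h1, h2, sub_eq_add_neg]

/-- Parity commutes with the right action up to twisting the functional. -/
theorem actR_parity (H : HopfSuperalgebra k) (g : Module.Dual k H.carrier) (a) :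
    H.actR g (H.parity a) = H.parity (H.actR (g ∘ₗ H.parity) a) := by
  rw [actR_apply, comul_parity, sliceR_map]; rfl

/-- The left coinvariants `{b | (q ⊗ id) Δ b = 1 ⊗ b}` of `q : H → K`. -/
def coinv (q : HopfSuperalgebra.Hom H K) : Submodule k H.carrier :=
  LinearMap.ker (TensorProduct.map q.toLinearMap LinearMap.id ∘ₗ H.comul -
    TensorProduct.mk k K.carrier H.carrier 1)

theorem mem_coinv (q : HopfSuperalgebra.Hom H K) {b} : b ∈ coinv q ↔
    TensorProduct.map q.toLinearMap LinearMap.id (H.comul b) = 1 ⊗ₜ[k] b := by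
  rw [coinv, LinearMap.mem_ker, LinearMap.sub_apply, sub_eq_zero]; rfl

theorem mem_coinv_iff (q : HopfSuperalgebra.Hom H K) {b} : b ∈ coinv q ↔
    ∀ f : Module.Dual k K.carrier, H.actL (f ∘ₗ q.toLinearMap) b = f 1 • b := by
  rw [mem_coinv]
  constructor
  · intro h f
    have := congrArg (sliceL f) h
    rwa [sliceL_map, sliceL_tmul] at this
  · intro h
    refine sliceL_ext fun f => ?_
    rw [sliceL_map, sliceL_tmul]
    exact h f

theorem actR_mem_coinv (q : HopfSuperalgebra.Hom H K) (g : Module.Dual k H.carrier) {b}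
    (hb : b ∈ coinv q) : H.actR g b ∈ coinv q := by
  rw [mem_coinv_iff] at hb ⊢
  intro f
  rw [H.dualActions.comm, hb, map_smul]

theorem parity_mem_coinv (q : HopfSuperalgebra.Hom H K) {b} (hb : b ∈ coinv q) :
    H.parity b ∈ coinv q := by
  rw [mem_coinv] at hb ⊢
  have hq : q.toLinearMap ∘ₗ H.parity = K.parity ∘ₗ q.toLinearMap := LinearMap.ext fun a => by
    simp only [LinearMap.comp_apply, parity_apply, map_sub, q.map_pe', q.map_po]
  rw [comul_parity, ← LinearMap.comp_apply, ← TensorProduct.map_comp, hq, LinearMap.id_comp]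
  have h1 := congrArg (TensorProduct.map K.parity H.parity) hb
  rw [← LinearMap.comp_apply, ← TensorProduct.map_comp, LinearMap.comp_id, TensorProduct.map_tmul,
    K.parity_of_even K.one_even] at h1
  exact h1

/-- If `K` is irreducible, every nonzero subspace stable under the left action of the dual of `K`
contains a nonzero coinvariant. -/
theorem IsIrreducible.exists_coinv (h : K.IsIrreducible) (q : HopfSuperalgebra.Hom H K)
    (D : Submodule k H.carrier) (hD0 : D ≠ ⊥) (hL : ∀ f, ∀ x ∈ D, H.actL f x ∈ D) :
    ∃ d ∈ D, d ≠ 0 ∧ d ∈ coinv q := by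
  let 𝒯 : Set (Module.End k H.carrier) :=
    {T | ∃ f : Module.Dual k K.carrier, f 1 = 0 ∧ T = H.actL (f ∘ₗ q.toLinearMap)}
  have h1 : ∀ n b, (∀ φ, KilledBy {T | ∃ f : Module.Dual k K.carrier, f 1 = 0 ∧ T = K.actL f} n
      (q.toLinearMap (H.actR φ b))) → KilledBy 𝒯 n b := by
    intro n
    induction n with
    | zero =>
      intro b hb
      have hb' : ∀ φ, q.toLinearMap (H.actR φ b) = 0 := hb
      show b = 0
      refine DualActions.ext_dual (k := k) fun φ => ?_
      have h2 := congrArg K.counit (hb' φ)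
      rw [q.map_counit', ← H.dualActions.adj, H.actL_counit, map_zero] at h2
      rw [h2, map_zero]
    | succ n ih =>
      rintro b hb _ ⟨f, hf, rfl⟩
      refine ih _ fun φ => ?_
      rw [← H.dualActions.comm, ← Hom.actL]
      exact hb φ _ ⟨f, hf, rfl⟩
  obtain ⟨b, hb, hb0⟩ := Submodule.exists_mem_ne_zero_of_ne_bot hD0
  obtain ⟨X, hX, hXb⟩ := H.dualActions.finR b
  obtain ⟨n, hn⟩ := KilledBy.uniform (h.killedBy K) (X.map q.toLinearMap) (hX.map _)
  obtain ⟨d, hd, hd0, hfix⟩ := (h1 n b fun φ => hn _ (Submodule.mem_map_of_mem (hXb φ))).exists_fixed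
    D (by rintro _ ⟨f, _, rfl⟩; exact hL _) hb hb0
  refine ⟨d, hd, hd0, (mem_coinv_iff q).2 ?_⟩
  have hcounit : K.counit ∘ₗ q.toLinearMap = H.counit := LinearMap.ext q.map_counit'
  have h3 : H.actL (K.counit ∘ₗ q.toLinearMap) d = d := by rw [hcounit, actL_counit]
  have h4 : ∀ f : Module.Dual k K.carrier, ∀ a : k,
      H.actL ((f - a • K.counit) ∘ₗ q.toLinearMap) d =
        H.actL (f ∘ₗ q.toLinearMap) d - a • H.actL (K.counit ∘ₗ q.toLinearMap) d := fun f a => by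
    rw [LinearMap.sub_comp, LinearMap.smul_comp]
    exact H.dualActions.subL _ _ a d
  exact K.eq_of_fixed (T := fun f => H.actL (f ∘ₗ q.toLinearMap) d) h4 h3
    fun f hf => hfix _ ⟨f, hf, rfl⟩

/-- If `R_φ(w) ∈ W` and `x w ∈ range p` for all `w ∈ W`, then all right slices of `Δ(x)(w ⊗ 1)`
(super product) lie in `range p`, by `Δ(x)(w ⊗ 1) = ∑ Δ(x w₁)(1 ⊗ S w₂)`. -/
theorem sliceR_twistedMul_mem (p : HopfSuperalgebra.Hom F H) (W : Submodule k H.carrier)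
    (hWR : ∀ g, ∀ w ∈ W, H.actR g w ∈ W) (x : H.carrier)
    (hx : ∀ w ∈ W, x * w ∈ LinearMap.range p.toLinearMap) (g : Module.Dual k H.carrier)
    {w} (hw : w ∈ W) :
    sliceR g (H.twistedMul x (w ⊗ₜ[k] 1)) ∈ LinearMap.range p.toLinearMap := by
  obtain ⟨t, ht⟩ := mem_range_of_sliceR W (t := H.comul w) fun g => hWR g w hw
  rw [← comulAntipode_comul, ← ht]
  clear ht
  induction t with
  | zero => simp
  | add u v hu hv => simp only [map_add]; exact add_mem hu hv
  | tmul u v =>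
    obtain ⟨u, hu⟩ := u
    obtain ⟨y, hy⟩ := hx u hu
    rw [TensorProduct.map_tmul, comulAntipode_tmul, twistedMul_mul, Submodule.subtype_apply,
      ← comul_mul', ← hy, p.map_comul']
    generalize F.comul y = s
    induction s with
    | zero => simp
    | add u v hu hv => simp only [map_add, add_mul]; exact add_mem hu hv
    | tmul a b =>
      rw [TensorProduct.map_tmul, Algebra.TensorProduct.tmul_mul_tmul, sliceR_tmul, mul_one]
      exact Submodule.smul_mem _ _ ⟨a, rfl⟩

theorem sliceR_twistedMul (x w : H.carrier) (g : Module.Dual k H.carrier) :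
    sliceR g (H.twistedMul x (w ⊗ₜ[k] 1)) =
      H.actR (g ∘ₗ H.pe) x * w + H.actR (g ∘ₗ H.po) x * H.parity w := by
  have h1 : ∀ (α : Module.End k H.carrier) (t : H.carrier ⊗[k] H.carrier) (z : H.carrier),
      sliceR g (TensorProduct.map LinearMap.id α t * (z ⊗ₜ[k] 1)) = sliceR (g ∘ₗ α) t * z := by
    intro α t z
    induction t with
    | zero => simp
    | tmul a b => simp
    | add u v hu hv => simp only [map_add, add_mul, hu, hv]
  rw [twistedMul_apply, map_add, TensorProduct.map_tmul, LinearMap.id_apply, h1, h1]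
  rfl

/-- Coinvariants lie in the image of `p`: the elements of `F` multiplying the finite-dimensional
right coideal generated by `b` into `range p` form a nonzero right coideal of `F`, which contains
`1` because `F` is irreducible. -/
theorem IsIrreducible.coinv_le_range (hF : F.IsIrreducible) (h2 : (2 : k) ≠ 0)
    (h : H.IsSuperCommutative) (p : HopfSuperalgebra.Hom F H) (q : HopfSuperalgebra.Hom H K)
    (hp : Function.Injective p.toLinearMap)
    (hker : LinearMap.ker q.toLinearMap = Submodule.span k
      {x : H.carrier | ∃ a b, x = a * p.toLinearMap b ∧ F.counit b = 0}) :
    coinv q ≤ LinearMap.range p.toLinearMap := by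
  intro b hb
  obtain ⟨Y, hY, hYb⟩ := H.dualActions.finR b
  let X : Submodule k H.carrier := Submodule.span k {x | ∃ g, x = H.actR g b}
  have hXfg : X.FG := by
    have hXY : X ≤ Y := Submodule.span_le.2 (by rintro _ ⟨g, rfl⟩; exact hYb g)
    haveI : FiniteDimensional k Y := Module.Finite.iff_fg.2 hY
    haveI := Submodule.finiteDimensional_of_le hXY
    exact Module.Finite.iff_fg.1 this
  have hXB : X ≤ coinv q := Submodule.span_le.2 (by rintro _ ⟨g, rfl⟩; exact actR_mem_coinv q g hb)
  have hXR : ∀ g, ∀ x ∈ X, H.actR g x ∈ X := by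
    intro g x hx
    refine (Submodule.span_le (p := X.comap (H.actR g))).2 ?_ hx
    rintro _ ⟨g', rfl⟩
    exact Submodule.subset_span ⟨g ∘ₗ H.actR g', by rw [H.dualActions.symm.mulL]⟩
  have hbX : b ∈ X := Submodule.subset_span ⟨H.counit, (H.actR_counit b).symm⟩
  -- closing up under parity lets the two summands in `sliceR_twistedMul` be treated separately
  let W : Submodule k H.carrier := X ⊔ X.map H.parity
  have hWB : W ≤ coinv q := sup_le hXB (by
    rintro _ ⟨x, hx, rfl⟩; exact parity_mem_coinv q (hXB hx))
  have hWR : ∀ g, ∀ w ∈ W, H.actR g w ∈ W := by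
    intro g w hw
    obtain ⟨x, hx, _, ⟨y, hy, rfl⟩, rfl⟩ := Submodule.mem_sup.1 hw
    rw [map_add, actR_parity]
    exact Submodule.add_mem_sup (hXR g x hx) (Submodule.mem_map_of_mem (hXR _ y hy))
  have hWσ : ∀ w ∈ W, H.parity w ∈ W := by
    intro w hw
    obtain ⟨x, hx, _, ⟨y, hy, rfl⟩, rfl⟩ := Submodule.mem_sup.1 hw
    rw [map_add, parity_parity, add_comm]
    exact Submodule.add_mem_sup hy (Submodule.mem_map_of_mem hx)
  obtain ⟨x₀, hx₀, hx₀W⟩ := exists_multiplier h2 h p W (hXfg.sup (hXfg.map _))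
    fun w hw => sub_mem_balanced p q hker ((mem_coinv q).1 (hWB hw))
  let J : Submodule k F.carrier :=
    { carrier := {x | ∀ w ∈ W, p.toLinearMap x * w ∈ LinearMap.range p.toLinearMap}
      add_mem' := fun {x y} hx hy w hw => by
        rw [map_add, add_mul]; exact add_mem (hx w hw) (hy w hw)
      zero_mem' := fun w _ => by rw [map_zero, zero_mul]; exact zero_mem _
      smul_mem' := fun c x hx w hw => by
        rw [map_smul, smul_mul_assoc]; exact Submodule.smul_mem _ _ (hx w hw) }
  have hJ0 : J ≠ ⊥ := fun hJ => hx₀ (by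
    have : x₀ ∈ J := hx₀W
    rw [hJ, Submodule.mem_bot] at this
    rw [this, map_zero])
  have hJR : ∀ f, ∀ x ∈ J, F.actR f x ∈ J := by
    intro f x hx w hw
    obtain ⟨r, hr⟩ := p.toLinearMap.exists_leftInverse_of_injective (LinearMap.ker_eq_bot.2 hp)
    obtain ⟨g, rfl⟩ : ∃ g : Module.Dual k H.carrier, f = g ∘ₗ p.toLinearMap :=
      ⟨f ∘ₗ r, by rw [LinearMap.comp_assoc, hr, LinearMap.comp_id]⟩
    rw [← Hom.actR]
    -- replacing `g` by its even and odd parts isolates `R_g(x) w` up to the parity of `w`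
    have hpe := sliceR_twistedMul_mem p W hWR _ hx (g ∘ₗ H.pe) hw
    have hpo := sliceR_twistedMul_mem p W hWR _ hx (g ∘ₗ H.po) (hWσ w hw)
    have e1 : (g ∘ₗ H.pe) ∘ₗ H.pe = g ∘ₗ H.pe := LinearMap.ext fun a => congrArg g (H.pe_pe a)
    have e2 : (g ∘ₗ H.pe) ∘ₗ H.po = 0 := LinearMap.ext fun a => by simp [H.pe_po]
    have e3 : (g ∘ₗ H.po) ∘ₗ H.pe = 0 := LinearMap.ext fun a => by simp [H.po_pe]
    have e4 : (g ∘ₗ H.po) ∘ₗ H.po = g ∘ₗ H.po := LinearMap.ext fun a => congrArg g (H.po_po a)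
    have e5 : g = g ∘ₗ H.pe + g ∘ₗ H.po := LinearMap.ext fun a => by
      rw [LinearMap.add_apply, LinearMap.comp_apply, LinearMap.comp_apply, ← map_add, H.pe_add_po]
    have e6 : ∀ a, H.actR 0 a = 0 := fun a => by
      have := H.dualActions.symm.smulL 0 0 a
      rwa [zero_smul, zero_smul] at this
    rw [sliceR_twistedMul, e1, e2, e6, zero_mul, add_zero] at hpe
    rw [sliceR_twistedMul, e3, e4, e6, zero_mul, zero_add, parity_parity] at hpo
    rw [e5, H.dualActions.symm.addL, add_mul]
    exact add_mem hpe hpo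
  have h1 := hF.one_mem_of_actR F J hJ0 hJR b (Submodule.mem_sup_left hbX)
  rwa [p.map_one', one_mul] at h1

/-- Extensions of unipotent supergroups are unipotent: a nonzero subcoalgebra contains a nonzero
coinvariant, and the coinvariants it contains form a nonzero right coideal of `F`, hence
contain `1`. -/
theorem IsIrreducible.extension (hF : F.IsIrreducible) (hK : K.IsIrreducible) (h2 : (2 : k) ≠ 0)
    (h : H.IsSuperCommutative) (p : HopfSuperalgebra.Hom F H) (q : HopfSuperalgebra.Hom H K)
    (hp : Function.Injective p.toLinearMap)
    (hker : LinearMap.ker q.toLinearMap = Submodule.span k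
      {x : H.carrier | ∃ a b, x = a * p.toLinearMap b ∧ F.counit b = 0}) :
    H.IsIrreducible := by
  refine H.isIrreducible_of_one_mem fun D hD0 hL hR => ?_
  obtain ⟨d, hd, hd0, hdq⟩ := hK.exists_coinv q D hD0 hL
  obtain ⟨x, rfl⟩ := hF.coinv_le_range h2 h p q hp hker hdq
  have h1 : (1 : F.carrier) ∈ (D ⊓ coinv q).comap p.toLinearMap := by
    refine hF.one_mem_of_actR F _ (fun h0 => hd0 ?_) ?_
    · have : x ∈ (D ⊓ coinv q).comap p.toLinearMap := ⟨hd, hdq⟩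
      rw [h0, Submodule.mem_bot] at this
      rw [this, map_zero]
    · intro f y hy
      obtain ⟨r, hr⟩ := p.toLinearMap.exists_leftInverse_of_injective (LinearMap.ker_eq_bot.2 hp)
      obtain ⟨g, rfl⟩ : ∃ g : Module.Dual k H.carrier, f = g ∘ₗ p.toLinearMap :=
        ⟨f ∘ₗ r, by rw [LinearMap.comp_assoc, hr, LinearMap.comp_id]⟩
      rw [Submodule.mem_comap, ← Hom.actR]
      exact ⟨hR g _ hy.1, actR_mem_coinv q g hy.2⟩
  have h3 := h1.1
  rwa [p.map_one'] at h3

end HopfSuperalgebra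

/-- Lemma 6.2: given a short exact sequence `N → G → F` of
affine supergroup schemes, `G` is unipotent iff both `N` and `F` are unipotent.
In terms of representing super-commutative Hopf superalgebras, the sequence
corresponds to a short exact sequence `A₃ = 𝒪(F) → A₂ = 𝒪(G) → A₁ = 𝒪(N)`
(`p` injective, `q` surjective with kernel `A₂·p(A₃)⁺`), and unipotence of a
supergroup scheme means irreducibility of its representing Hopf superalgebra. -/
theorem unipotent_iff_of_shortExact
    (k : Type) [Field k] (hchar : ringChar k ≠ 2)
    (A₁ A₂ A₃ : HopfSuperalgebra k)
    (h1 : A₁.IsSuperCommutative) (h2 : A₂.IsSuperCommutative) (h3 : A₃.IsSuperCommutative)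
    (p : HopfSuperalgebra.Hom A₃ A₂) (q : HopfSuperalgebra.Hom A₂ A₁)
    (hp : Function.Injective p.toLinearMap)
    (hq : Function.Surjective q.toLinearMap)
    (hker : LinearMap.ker q.toLinearMap = Submodule.span k
      {x : A₂.carrier | ∃ a b, x = a * p.toLinearMap b ∧ A₃.counit b = 0}) :
    A₂.IsIrreducible ↔ (A₁.IsIrreducible ∧ A₃.IsIrreducible) := by
  exact ⟨fun h => ⟨HopfSuperalgebra.IsIrreducible.of_surjective q hq h,
      HopfSuperalgebra.IsIrreducible.of_injective p hp h⟩,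
    fun h => h.2.extension h.1 (Ring.two_ne_zero hchar) h2 p q hp hker⟩

end
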